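/- Let m ≥ 2, λ = (m−2)/2, and let M_k be a Cl_{0,m}⊗ℂ-valued homogeneous polynomial of degree k with ∂_x M_k = 0. Define ψ_{2j,k}(x) = L_j^{m/2+k−1}(|x|²) M_k(x) e^{−|x|²/2} and ψ_{2j+1,k}(x) = L_j^{m/2+k}(|x|²) x M_k(x) e^{−|x|²/2}, where L_j^α is the generalized Laguerre polynomial. Then the Clifford–Fourier transform F_− f(y) = (2π)^{−m/2}∫_{ℝ^m}K_−(x,y)f(x)dx satisfies the eigenvalue equations: F_−(ψ_{2j,k}) = (−1)^{j+k} ψ_{2j,k} and F_−(ψ_{2j+1,k}) = i^m (−1)^{j+1} ψ_{2j+1,k}. -/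

import Mathlib

open scoped BigOperators
open MeasureTheory

noncomputable section

namespace CliffordFourier

/-- Concrete model of the complexified Clifford algebra `Cl_{0,m} ⊗ ℂ`:
an element is the family of its complex coefficients on the canonical basis
`e_S = e_{i₁} ⋯ e_{i_k}` (for `S = {i₁ < … < i_k} ⊆ {0,…,m-1}`). -/
def Cl (m : ℕ) : Type := Finset (Fin m) → ℂ

variable {m : ℕ}

instance : NormedAddCommGroup (Cl m) :=
  inferInstanceAs (NormedAddCommGroup (Finset (Fin m) → ℂ))
instance : NormedSpace ℝ (Cl m) :=
  inferInstanceAs (NormedSpace ℝ (Finset (Fin m) → ℂ))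
instance : Module ℂ (Cl m) := inferInstanceAs (Module ℂ (Finset (Fin m) → ℂ))
instance : CompleteSpace (Cl m) := inferInstanceAs (CompleteSpace (Finset (Fin m) → ℂ))

/-- The coefficient of `a` on the basis element `e_S`. -/
def coeff (a : Cl m) : Finset (Fin m) → ℂ := a

/-- Build an element of the Clifford algebra from its coefficients. -/
def ofCoeff (f : Finset (Fin m) → ℂ) : Cl m := f

/-- `1 = e_∅`. -/
instance : One (Cl m) := ⟨ofCoeff fun S => if S = (∅ : Finset (Fin m)) then 1 else 0⟩

/-- Clifford multiplication, determined by the relations `e_i e_j = - e_j e_i` (`i ≠ j`)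
and `e_i² = -1`; on basis elements it is given by
`e_T · e_U = (-1)^{#{(t,u) ∈ T×U : u < t}} · (-1)^{#(T∩U)} · e_{T Δ U}`. -/
instance : Mul (Cl m) :=
  ⟨fun a b => ofCoeff fun S => ∑ T : Finset (Fin m),
    ((-1 : ℂ) ^ ((((T ×ˢ (symmDiff T S)).filter fun p : Fin m × Fin m => p.2 < p.1).card)
        + (T ∩ (symmDiff T S)).card))
      * coeff a T * coeff b (symmDiff T S)⟩

/-- The generator `e_i`. -/
def e (m : ℕ) (i : Fin m) : Cl m := ofCoeff fun S => if S = {i} then 1 else 0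

/-- The embedding of a vector `x ∈ ℝ^m` as `x = Σ_i x_i e_i` in the Clifford algebra. -/
def vec (m : ℕ) (x : Fin m → ℝ) : Cl m := ∑ i : Fin m, (x i : ℂ) • e m i

/-- The Euclidean inner product `⟨x,y⟩ = Σ_i x_i y_i`. -/
def ip (x y : Fin m → ℝ) : ℝ := ∑ i, x i * y i

/-- The Euclidean norm `|x|`. -/
def nrm (x : Fin m → ℝ) : ℝ := Real.sqrt (ip x x)

/-- The wedge product `x∧y = Σ_{j<k} e_j e_k (x_j y_k - x_k y_j)`. -/
def wedge (m : ℕ) (x y : Fin m → ℝ) : Cl m :=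
  ∑ j : Fin m, ∑ k : Fin m,
    if j < k then ((x j * y k - x k * y j : ℝ) : ℂ) • (e m j * e m k) else 0

/-- Complex conjugation of the coefficients. -/
def cconj (a : Cl m) : Cl m := ofCoeff fun S => starRingEnd ℂ (coeff a S)

/-- The partial derivative `∂_{x_i}` of a Clifford-algebra-valued function. -/
def pder (i : Fin m) (f : (Fin m → ℝ) → Cl m) : (Fin m → ℝ) → Cl m :=
  fun x => fderiv ℝ f x (Pi.single i 1)

/-- The Dirac operator `∂_x = Σ_i e_i ∂_{x_i}`. -/
def dirac (f : (Fin m → ℝ) → Cl m) : (Fin m → ℝ) → Cl m :=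
  fun x => ∑ i : Fin m, e m i * pder i f x

/-- The Euler operator `E = Σ_i x_i ∂_{x_i}`. -/
def euler (f : (Fin m → ℝ) → Cl m) : (Fin m → ℝ) → Cl m :=
  fun x => ∑ i : Fin m, x i • pder i f x

/-- The Laplacian `Δ = Σ_i ∂_{x_i}²`. -/
def lapl (f : (Fin m → ℝ) → Cl m) : (Fin m → ℝ) → Cl m :=
  fun x => ∑ i : Fin m, pder i (pder i f) x

/-- The Gegenbauer polynomial `C_k^λ(w)`, defined through the standard three-term
recurrence, equivalent to the generating function `(1-2wt+t²)^{-λ} = Σ_k C_k^λ(w) t^k`. -/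
def geg (lam : ℝ) : ℕ → ℝ → ℝ
  | 0, _ => 1
  | 1, w => 2 * lam * w
  | (k+2), w => (2 * ((k : ℝ) + 1 + lam) * w * geg lam (k+1) w
      - ((k : ℝ) + 2 * lam) * geg lam k w) / ((k : ℝ) + 2)

/-- The entire function `J̃_a(t) = t^{-a} J_a(t) = Σ_{j≥0} (-1)^j (t/2)^{2j} / (j! Γ(j+a+1) 2^a)`
(for `t > 0` this is literally `t^{-a} J_a(t)`). -/
def besselJt (a t : ℝ) : ℝ :=
  ∑' j : ℕ, ((-1 : ℝ)^j * (t/2) ^ (2*j)) / (j.factorial * Real.Gamma ((j : ℝ) + a + 1) * (2:ℝ)^a)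

/-- The renormalized Gegenbauer polynomial `((k+λ)/λ) C_k^λ = C_k^{λ+1} - C_{k-2}^{λ+1}`
(the right-hand side also makes sense for `λ = 0`, i.e. `m = 2`). -/
def gegT (lam : ℝ) (k : ℕ) (w : ℝ) : ℝ :=
  geg (lam + 1) k w - (if 2 ≤ k then geg (lam + 1) (k - 2) w else 0)

/-- `A_λ(w,z) = 2^{λ-1} Γ(λ+1) Σ_{k≥0} (u + (-1)^k) z^{-λ} J_{k+λ}(z) C_k^λ(w)`, where `u = i^m`;
here written using `z^{-λ} J_{k+λ}(z) = z^k J̃_{k+λ}(z)`, which makes the formula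
well defined for all `z ≥ 0` (and all `m ≥ 2`). -/
def AfunR (u : ℂ) (lam w z : ℝ) : ℂ :=
  (((2:ℝ)^(lam - 1) * Real.Gamma (lam + 1) : ℝ) : ℂ) *
    ∑' k : ℕ, (u + (-1 : ℂ)^k) * ((z^k * besselJt ((k : ℝ) + lam) z * geg lam k w : ℝ) : ℂ)

/-- `B_λ(w,z) = -2^{λ-1} Γ(λ) Σ_{k≥0} (k+λ)(u - (-1)^k) z^{-λ} J_{k+λ}(z) C_k^λ(w)`;
here written using `Γ(λ)(k+λ)C_k^λ = Γ(λ+1)(C_k^{λ+1} - C_{k-2}^{λ+1})` and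
`z^{-λ} J_{k+λ}(z) = z^k J̃_{k+λ}(z)`, which makes the formula well defined
for all `z ≥ 0` and all `m ≥ 2` (including `λ = 0`). -/
def BfunR (u : ℂ) (lam w z : ℝ) : ℂ :=
  -(((2:ℝ)^(lam - 1) * Real.Gamma (lam + 1) : ℝ) : ℂ) *
    ∑' k : ℕ, (u - (-1 : ℂ)^k) * ((z^k * besselJt ((k : ℝ) + lam) z * gegT lam k w : ℝ) : ℂ)

/-- `C_λ(w,z) = -2^{λ-1} Γ(λ) Σ_{k≥0} (u + (-1)^k) z^{-λ-1} J_{k+λ}(z) (C_k^λ)'(w)`;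
here written using `Γ(λ) (C_k^λ)' = 2 Γ(λ+1) C_{k-1}^{λ+1}` and
`z^{-λ-1} J_{k+λ}(z) = z^{k-1} J̃_{k+λ}(z)`, which makes the formula well defined
for all `z ≥ 0` and all `m ≥ 2` (including `λ = 0`). -/
def CfunR (u : ℂ) (lam w z : ℝ) : ℂ :=
  -(((2:ℝ)^lam * Real.Gamma (lam + 1) : ℝ) : ℂ) *
    ∑' k : ℕ, (u + (-1 : ℂ)^k) *
      ((z^(k - 1) * besselJt ((k : ℝ) + lam) z
        * (if 1 ≤ k then geg (lam + 1) (k - 1) w else 0) : ℝ) : ℂ)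

/-- The Clifford-Fourier kernel
`K_-(x,y) = A_λ(w,z) + B_λ(w,z) + (x∧y) C_λ(w,z)`
with `λ = (m-2)/2`, `z = |x||y|`, `w = ⟨x,y⟩/(|x||y|)`. -/
def Kminus (m : ℕ) (x y : Fin m → ℝ) : Cl m :=
  (AfunR (Complex.I ^ m) (((m:ℝ) - 2)/2) (ip x y / (nrm x * nrm y)) (nrm x * nrm y)
    + BfunR (Complex.I ^ m) (((m:ℝ) - 2)/2) (ip x y / (nrm x * nrm y)) (nrm x * nrm y)) • (1 : Cl m)
  + CfunR (Complex.I ^ m) (((m:ℝ) - 2)/2) (ip x y / (nrm x * nrm y)) (nrm x * nrm y) • wedge m x y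

/-- The generalized Laguerre polynomial
`L_j^a(t) = Σ_{i=0}^j (-1)^i binom(j+a, j-i) t^i / i!`,
with `binom(j+a, j-i) = Γ(j+a+1)/(Γ(i+a+1) (j-i)!)`. -/
def lag (a : ℝ) (j : ℕ) (t : ℝ) : ℝ :=
  ∑ i ∈ Finset.range (j + 1),
    (-1 : ℝ)^i * (Real.Gamma ((j:ℝ) + a + 1) / (Real.Gamma ((i:ℝ) + a + 1) * ((j - i).factorial : ℝ)))
      * t^i / (i.factorial : ℝ)

section Part1
open Polynomial in
/-- Gegenbauer polynomials as polynomials. -/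
def gp (mu : ℝ) : ℕ → ℝ[X]
  | 0 => 1
  | 1 => C (2 * mu) * X
  | (k+2) => C (((k:ℝ)+2)⁻¹) * (C (2 * ((k : ℝ) + 1 + mu)) * X * gp mu (k+1)
      - C ((k : ℝ) + 2 * mu) * gp mu k)

section geg
open Polynomial

lemma hC2 : (C (2:ℝ) : ℝ[X]) = 2 := rfl

lemma gp_eval (mu : ℝ) (w : ℝ) : ∀ k, (gp mu k).eval w = geg mu k w
  | 0 => by simp [gp, geg]
  | 1 => by simp [gp, geg]
  | (k+2) => by
    simp only [gp, geg, eval_mul, eval_sub, eval_C, eval_X, gp_eval mu w k, gp_eval mu w (k+1)]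
    field_simp

lemma gp_rec (mu : ℝ) (k : ℕ) : ((k:ℝ[X])+2) * gp mu (k+2) =
    2 * ((k:ℝ[X]) + 1 + C mu) * X * gp mu (k+1) - ((k:ℝ[X]) + 2 * C mu) * gp mu k := by
  have h : ((k:ℝ)+2) ≠ 0 := by positivity
  have h2 : ((k:ℝ[X])+2) * C (((k:ℝ)+2)⁻¹) = 1 := by
    have : ((k:ℝ[X])+2) = C ((k:ℝ)+2) := by simp [hC2]
    rw [this, ← C_mul, mul_inv_cancel₀ h, C_1]
  rw [gp, ← mul_assoc, h2, one_mul]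
  simp [hC2]

lemma nat_ne (k : ℕ) : ((k:ℝ[X])+1) ≠ 0 := by exact_mod_cast Nat.succ_ne_zero k

/-- the two basic differential relations -/
lemma gp_diff (mu : ℝ) (k : ℕ) :
    ((k:ℝ[X])+1) * gp mu (k+1) = X * derivative (gp mu (k+1)) - derivative (gp mu k) ∧
    derivative (gp mu (k+1)) - X * derivative (gp mu k) = ((k:ℝ[X]) + 2 * C mu) * gp mu k := by
  induction k with
  | zero => simp [gp, hC2]; ring
  | succ k ih =>
    obtain ⟨h1, h2⟩ := ih
    have hr := gp_rec mu k
    have hd := congrArg derivative hr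
    simp only [derivative_mul, derivative_sub, derivative_add, derivative_natCast, derivative_C,
      derivative_X, derivative_one, derivative_ofNat] at hd
    have hn := nat_ne (k+1)
    push_cast at *
    have h3 : derivative (gp mu (k+2)) - X * derivative (gp mu (k+1)) =
        ((k:ℝ[X]) + 1 + 2 * C mu) * gp mu (k+1) := by
      apply mul_left_cancel₀ hn
      linear_combination hd - ((k:ℝ[X]) + 2 * C mu) * h1
    refine ⟨?_, h3⟩
    linear_combination hr - X * h3 + h2 + X * h1

lemma gp_d1 (mu : ℝ) (k : ℕ) : (1 - X^2) * derivative (gp mu (k+1)) =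
    -((k:ℝ[X])+1) * X * gp mu (k+1) + ((k:ℝ[X]) + 2 * C mu) * gp mu k := by
  obtain ⟨h1, h2⟩ := gp_diff mu k
  linear_combination h2 + X * h1

lemma gp_d2 (mu : ℝ) (k : ℕ) : (1 - X^2) * derivative (gp mu k) =
    ((k:ℝ[X]) + 2 * C mu) * X * gp mu k - ((k:ℝ[X])+1) * gp mu (k+1) := by
  obtain ⟨h1, h2⟩ := gp_diff mu k
  linear_combination X * h2 + h1

lemma gp_deriv (mu : ℝ) (k : ℕ) : derivative (gp mu (k+1)) = 2 * C mu * gp (mu+1) k := by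
  induction k using Nat.twoStepInduction with
  | zero => simp [gp, hC2]
  | one =>
    have := (gp_diff mu 1).2
    simp [gp, hC2] at this ⊢
    linear_combination this
  | more k ih1 ih2 =>
    have hr := gp_rec (mu+1) k
    have h1 := (gp_diff mu (k+1)).1
    have h2 := (gp_diff mu (k+2)).2
    have hn := nat_ne (k+1)
    simp only [C_add, C_1] at hr
    push_cast at *
    apply mul_left_cancel₀ hn
    linear_combination ((k:ℝ[X])+2) * h2 + ((k:ℝ[X])+2+2*C mu) * h1
      + 2 * ((k:ℝ[X])+2+C mu) * X * ih2 - ((k:ℝ[X])+2+2*C mu) * ih1 - 2 * C mu * hr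

/-- renormalized -/
def gT (lam : ℝ) (k : ℕ) : ℝ[X] := gp (lam+1) k - (if 2 ≤ k then gp (lam+1) (k-2) else 0)

lemma gT_eval (lam w : ℝ) (k : ℕ) : (gT lam k).eval w = gegT lam k w := by
  unfold gT gegT; split_ifs <;> simp [gp_eval]

def gQ (lam : ℝ) (k : ℕ) : ℝ[X] := if 1 ≤ k then gp (lam+1) (k-1) else 0

lemma gT_deriv (lam : ℝ) (k : ℕ) : derivative (gT lam k) = 2 * ((k:ℝ[X]) + C lam) * gQ lam k := by
  match k with
  | 0 => simp [gT, gQ, gp]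
  | 1 => simp [gT, gQ, gp, hC2]; ring
  | k+2 =>
    simp [gT, gQ]
    have h1 := (gp_diff (lam+1) k).1
    have h2 := (gp_diff (lam+1) (k+1)).2
    simp only [C_add, C_1] at *
    push_cast at *
    linear_combination -h1 + h2

lemma gp_gT (lam : ℝ) (k : ℕ) : ((k:ℝ[X]) + C lam) * gp lam k = C lam * gT lam k := by
  match k with
  | 0 => simp [gT, gp]
  | 1 => simp [gT, gp, hC2]; ring
  | k+2 =>
    simp [gT]
    have h1 := (gp_diff lam (k+1)).1
    have h2 := (gp_diff lam (k+2)).2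
    have h3 := gp_deriv lam k
    have h4 := gp_deriv lam (k+2)
    push_cast at *
    have h2' : (2:ℝ[X]) ≠ 0 := by norm_num
    apply mul_left_cancel₀ h2'
    linear_combination h1 - h2 + h4 - h3

lemma gT_ode (lam : ℝ) (k : ℕ) : (1 - X^2) * derivative (derivative (gT lam k))
    - (2 * C lam + 1) * X * derivative (gT lam k) + (k:ℝ[X]) * ((k:ℝ[X]) + 2 * C lam) * gT lam k = 0 := by
  match k with
  | 0 => simp [gT, gp]
  | 1 => simp [gT, gp, hC2]; ring
  | k+2 =>
    have h1 := gp_d1 (lam+1) k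
    have h2 := gp_d2 (lam+1) (k+1)
    rw [gT_deriv]
    simp [gT, gQ] at *
    linear_combination ((k:ℝ[X]) + 2 + 2 * C lam) * h2 + ((k:ℝ[X]) + 2) * h1

lemma gp_coeff (mu : ℝ) (k : ℕ) : ∀ n, (gp mu k).coeff n ≠ 0 → n ≤ k ∧ Even (k - n) := by
  induction k using Nat.twoStepInduction with
  | zero => intro n h; simp [gp, coeff_one] at h; simp [h]
  | one =>
    intro n h
    rw [gp, coeff_C_mul, coeff_X] at h
    by_cases hn : 1 = n
    · simp [← hn]
    · simp [hn] at h
  | more k ih1 ih2 =>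
    intro n h
    rw [gp, coeff_C_mul, coeff_sub, mul_assoc, coeff_C_mul, coeff_C_mul] at h
    have h' := right_ne_zero_of_mul h
    by_cases ha : (X * gp mu (k+1)).coeff n = 0
    · rw [ha] at h'
      have : (gp mu k).coeff n ≠ 0 := by intro h0; rw [h0] at h'; simp at h'
      obtain ⟨h1, h2⟩ := ih1 n this
      refine ⟨by omega, ?_⟩
      rw [show k + 2 - n = (k - n) + 2 by omega]
      exact h2.add even_two
    · cases n with
      | zero => simp at ha
      | succ n =>
        rw [coeff_X_mul] at ha
        obtain ⟨h1, h2⟩ := ih2 n ha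
        refine ⟨by omega, ?_⟩
        rw [show k + 2 - (n+1) = (k + 1 - n) by omega]
        exact h2

lemma gT_coeff (lam : ℝ) (k : ℕ) : ∀ n, (gT lam k).coeff n ≠ 0 → n ≤ k ∧ Even (k - n) := by
  intro n h
  rw [gT, coeff_sub] at h
  by_cases ha : (gp (lam+1) k).coeff n = 0
  · split_ifs at h with hk
    · rw [ha] at h
      obtain ⟨h1, h2⟩ := gp_coeff (lam+1) (k-2) n (by intro h0; rw [h0] at h; simp at h)
      refine ⟨by omega, ?_⟩
      rw [show k - n = (k - 2 - n) + 2 by omega]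
      exact h2.add even_two
    · simp [ha] at h
  · exact gp_coeff _ _ _ ha

lemma gp_lead (mu : ℝ) (hmu : 0 < mu) (k : ℕ) :
    (gp mu k).coeff k = 2^k * Real.Gamma (mu + k) / (Real.Gamma mu * k.factorial) := by
  have hG : Real.Gamma mu ≠ 0 := (Real.Gamma_pos_of_pos hmu).ne'
  induction k using Nat.twoStepInduction with
  | zero => simp [gp, hG]
  | one =>
    simp [gp, Real.Gamma_add_one hmu.ne']; field_simp
  | more k ih1 ih2 =>
    have h0 : (gp mu k).coeff (k+2) = 0 := by
      by_contra h; have := (gp_coeff mu k _ h).1; omega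
    rw [gp, coeff_C_mul, coeff_sub, mul_assoc, coeff_C_mul, coeff_C_mul, coeff_X_mul, ih2, h0]
    have : mu + ((k+2:ℕ):ℝ) = (mu + ((k+1:ℕ):ℝ)) + 1 := by push_cast; ring
    rw [this, Real.Gamma_add_one (by positivity)]
    rw [show (k+2).factorial = (k+2) * (k+1).factorial from rfl]
    have : ((k+1).factorial:ℝ) ≠ 0 := by positivity
    push_cast
    field_simp
    ring

lemma gT_lead (lam : ℝ) (hl : 0 ≤ lam) (k : ℕ) :
    (gT lam k).coeff k = 2^k * Real.Gamma (k + lam + 1) / (Real.Gamma (lam + 1) * k.factorial) := by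
  rw [gT, coeff_sub, gp_lead _ (by linarith)]
  have : (if 2 ≤ k then gp (lam+1) (k-2) else 0).coeff k = 0 := by
    split_ifs with h
    · by_contra h'; have := (gp_coeff _ _ _ h').1; omega
    · simp
  rw [this, sub_zero]
  congr 3; ring

end geg
end Part1

section Part2
/-- moment sequence -/
def am (lam : ℝ) (n l : ℕ) : ℝ :=
  if l ≤ n ∧ Even (n - l) then
    (n.factorial : ℝ) / (2^n * ((n-l)/2).factorial * Real.Gamma (((n:ℝ)+l)/2 + lam + 1)) else 0

lemma am_diag (lam : ℝ) (q l : ℕ) : am lam (l+2*q) l =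
    ((l+2*q).factorial : ℝ) / (2^(l+2*q) * q.factorial * Real.Gamma ((l:ℝ)+q + lam + 1)) := by
  have h1 : (l + 2*q - l) = 2*q := by omega
  rw [am, if_pos ⟨by omega, by simp [h1]⟩, h1, Nat.mul_div_cancel_left _ (by norm_num)]
  push_cast
  congr 4; ring

lemma am_zero (lam : ℝ) {n l : ℕ} (h : ¬ (l ≤ n ∧ Even (n - l))) : am lam n l = 0 := if_neg h

lemma am_b (lam : ℝ) (hl : 0 ≤ lam) (n l : ℕ) :
    ((n:ℝ)+1) * am lam n l = (n + l + 2 + 2*lam) * am lam (n+1) (l+1) := by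
  by_cases h : l ≤ n ∧ Even (n - l)
  · obtain ⟨h1, q, hq⟩ := h
    obtain rfl : n = l + 2*q := by omega
    rw [show l + 2*q + 1 = (l+1) + 2*q by ring, am_diag, am_diag,
      show (l + 1 + 2*q).factorial = (l+2*q+1) * (l+2*q).factorial from by
        rw [show l+1+2*q = l+2*q+1 by ring]; rfl]
    have e : ((l+1:ℕ):ℝ) + q + lam + 1 = ((l:ℝ)+q+lam+1)+1 := by push_cast; ring
    have hp : 0 < (l:ℝ)+q+lam+1 := by positivity
    have := (Real.Gamma_pos_of_pos hp).ne'
    rw [e, Real.Gamma_add_one hp.ne']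
    have := Nat.factorial_ne_zero q
    push_cast
    field_simp
    ring
  · rw [am_zero lam h, am_zero lam]; · simp
    rwa [Nat.add_sub_add_right, Nat.add_le_add_iff_right]

lemma am_b0 (lam : ℝ) (l : ℕ) : am lam 0 (l+1) = 0 := am_zero _ (by omega)

lemma am_a0 (lam : ℝ) (l : ℕ) : (l:ℝ) * am lam 0 l = 0 := by
  cases l <;> simp [am_b0]

lemma am_a (lam : ℝ) (n l : ℕ) :
    ((n:ℝ)+1) * am lam n (l+1) = (n + 1 - l) * am lam (n+1) l := by
  by_cases h : l + 1 ≤ n ∧ Even (n - (l+1))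
  · obtain ⟨h1, q, hq⟩ := h
    obtain rfl : n = (l + 1) + 2*q := by omega
    rw [show l + 1 + 2*q + 1 = l + 2*(q+1) by ring, am_diag, am_diag,
      show (l + 2*(q+1)).factorial = (l+2*q+2) * (l+1+2*q).factorial from by
        rw [show l+2*(q+1) = (l+1+2*q)+1 by ring, Nat.factorial_succ]; ring,
      Nat.factorial_succ q]
    have e : ((l+1:ℕ):ℝ) + q + lam + 1 = (l:ℝ)+(q+1:ℕ)+lam+1 := by push_cast; ring
    rw [e]
    by_cases hG : Real.Gamma ((l:ℝ)+(q+1:ℕ)+lam+1) = 0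
    · rw [hG]; simp
    have := Nat.factorial_ne_zero q
    push_cast at *
    field_simp
    ring
  · rw [am_zero lam h]
    by_cases h2 : l ≤ n+1 ∧ Even (n+1-l)
    · obtain ⟨h3, q, hq⟩ := h2
      have : n + 1 = l := by
        by_contra hne
        apply h
        refine ⟨by omega, q-1, by omega⟩
      rw [← this]; push_cast; ring
    · rw [am_zero lam h2]; simp

lemma am_c (lam : ℝ) (hl : 0 ≤ lam) (n l : ℕ) :
    ((n:ℝ)+2)*(n+1) * am lam n l = (n+2-l)*(n+2+l+2*lam) * am lam (n+2) l := by
  have h1 := am_b lam hl n l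
  have h2 := am_a lam (n+1) l
  push_cast at h2
  rw [show n+1+1 = n+2 from rfl] at h2
  linear_combination (n+2:ℝ) * h1 + (n+l+2+2*lam) * h2

section L
open Polynomial
/-- the functional -/
def Lam (lam : ℝ) (l : ℕ) : ℝ[X] →ₗ[ℝ] ℝ :=
  Polynomial.lsum fun n => LinearMap.mulRight ℝ (am lam n l)

lemma Lam_apply (lam : ℝ) (l : ℕ) (p : ℝ[X]) : Lam lam l p = p.sum fun n c => c * am lam n l := by
  simp [Lam, Polynomial.lsum_apply]

lemma Lam_mono (lam : ℝ) (l n : ℕ) (c : ℝ) : Lam lam l (monomial n c) = c * am lam n l := by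
  rw [Lam_apply, sum_monomial_index]; simp

lemma Lam_A (lam : ℝ) (l : ℕ) (p : ℝ[X]) :
    Lam lam (l+1) (derivative p) - Lam lam l (X * derivative p) = - l * Lam lam l p := by
  induction p using Polynomial.induction_on' with
  | add p q hp hq => simp only [map_add, mul_add]; linear_combination hp + hq
  | monomial n c =>
    rw [derivative_monomial, X_mul_monomial, Lam_mono, Lam_mono, Lam_mono]
    cases n with
    | zero => cases l <;> simp [am_b0]
    | succ n =>
      have := am_a lam n l
      simp only [Nat.add_sub_cancel]; push_cast
      linear_combination c * this

lemma Lam_B (lam : ℝ) (hl : 0 ≤ lam) (l : ℕ) (p : ℝ[X]) :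
    Lam lam l (derivative p) - Lam lam (l+1) (X * derivative p)
      = (l + 2*lam + 1) * Lam lam (l+1) p := by
  induction p using Polynomial.induction_on' with
  | add p q hp hq => simp only [map_add, mul_add]; linear_combination hp + hq
  | monomial n c =>
    rw [derivative_monomial, X_mul_monomial, Lam_mono, Lam_mono, Lam_mono]
    cases n with
    | zero => simp [am_b0]
    | succ n =>
      have := am_b lam hl n l
      simp only [Nat.add_sub_cancel]; push_cast
      linear_combination c * this

lemma Lam_ode (lam : ℝ) (hl : 0 ≤ lam) (l : ℕ) (p : ℝ[X]) :
    Lam lam l ((1 - X^2) * derivative (derivative p) - (2 * C lam + 1) * X * derivative p)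
      = - (l * (l + 2*lam)) * Lam lam l p := by
  induction p using Polynomial.induction_on' with
  | add p q hp hq => simp only [map_add, mul_add] at *; rw [add_sub_add_comm, map_add, hp, hq]
  | monomial n c =>
    have e : (1 - X^2) * derivative (derivative (monomial n c)) -
        (2 * C lam + 1) * X * derivative (monomial n c) =
        monomial (n-1-1) (c * n * (n-1:ℕ)) - monomial n (c * n * ((n-1:ℕ) + 2*lam+1)) := by
      cases n with
      | zero => simp
      | succ n =>
        cases n with
        | zero => simp [← C_mul_X_pow_eq_monomial, hC2]; ring
        | succ n =>
          simp [← C_mul_X_pow_eq_monomial, hC2]; ring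
    rw [e, map_sub, Lam_mono, Lam_mono, Lam_mono]
    cases n with
    | zero => cases l <;> simp [am_b0]
    | succ n =>
      cases n with
      | zero =>
        have h1 := am_b lam hl 0 (l-1)
        cases l with
        | zero => rw [show am lam (0+1) 0 = 0 from am_zero lam (by decide)]; simp
        | succ l =>
          have h2 := am_a0 lam l
          have h3 := am_b lam hl 0 l
          simp at h3 ⊢
          linear_combination c * (l:ℝ) * h3 - c * h2
      | succ n =>
        have := am_c lam hl n l
        simp only [Nat.add_sub_cancel]; push_cast
        linear_combination c * this

lemma Lam_gT_ne (lam : ℝ) (hl : 0 ≤ lam) (k l : ℕ) (h : k ≠ l) : Lam lam l (gT lam k) = 0 := by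
  have h1 := gT_ode lam k
  have h2 := Lam_ode lam hl l (gT lam k)
  have h3 : (1 - X^2) * derivative (derivative (gT lam k))
    - (2 * C lam + 1) * X * derivative (gT lam k) = (-((k:ℝ) * (k + 2*lam))) • gT lam k := by
    rw [smul_eq_C_mul]; simp [hC2]
    linear_combination h1
  rw [h3, map_smul, smul_eq_mul] at h2
  have h4 : ((k:ℝ) - l) * (k + l + 2*lam) * Lam lam l (gT lam k) = 0 := by linear_combination -h2
  have h5 : (k:ℝ) - l ≠ 0 := sub_ne_zero.2 (by exact_mod_cast h)
  have h6 : (k:ℝ) + l + 2*lam ≠ 0 := by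
    have : 0 < (k:ℝ) + l := by
      have : 0 < k + l := by omega
      exact_mod_cast this
    positivity
  simpa [h5, h6] using h4

lemma Lam_gT_self (lam : ℝ) (hl : 0 ≤ lam) (k : ℕ) :
    Lam lam k (gT lam k) = 1 / Real.Gamma (lam + 1) := by
  rw [Lam_apply, Polynomial.sum, Finset.sum_eq_single k]
  · rw [gT_lead _ hl]
    have := am_diag lam 0 k
    simp at this
    rw [this]
    have h1 := (Real.Gamma_pos_of_pos (show 0 < lam + 1 by linarith)).ne'
    have h2 := (Real.Gamma_pos_of_pos (show 0 < (k:ℝ) + lam + 1 by positivity)).ne'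
    have := Nat.factorial_ne_zero k
    field_simp
  · intro n hn hnk
    rw [mem_support_iff] at hn
    have := (gT_coeff _ _ _ hn).1
    rw [am_zero]; · simp
    omega
  · intro h; rw [notMem_support_iff] at h; simp [h]

/-- total eigenvalue for monogenic -/
lemma eig1 (u : ℂ) (lam : ℝ) (hl : 0 ≤ lam) (k l : ℕ) (hu : (k:ℝ) + lam = 0 → u + (-1)^k = 0) :
    (u + (-1)^k) * (Lam lam l (gp lam k) : ℂ) - (u - (-1)^k) * (Lam lam l (gT lam k) : ℂ)
     - 2 * (u + (-1)^k) * (Lam lam (l+1) (gQ lam k) - Lam lam l (X * gQ lam k) : ℝ)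
    = if k = l then 2 * (-1)^k * ((1 / Real.Gamma (lam + 1) : ℝ) : ℂ) else 0 := by
  have h1 : ((k:ℝ) + lam) * Lam lam l (gp lam k) = lam * Lam lam l (gT lam k) := by
    have := congrArg (Lam lam l) (gp_gT lam k)
    rwa [show ((k:ℝ[X]) + C lam) = C ((k:ℝ) + lam) by simp, ← smul_eq_C_mul, ← smul_eq_C_mul,
      map_smul, map_smul] at this
  have h2 : 2 * ((k:ℝ) + lam) * (Lam lam (l+1) (gQ lam k) - Lam lam l (X * gQ lam k)) =
      - l * Lam lam l (gT lam k) := by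
    rw [← Lam_A, gT_deriv, show 2 * ((k:ℝ[X]) + C lam) = C (2 * ((k:ℝ) + lam)) by simp [hC2],
      mul_left_comm, ← smul_eq_C_mul, ← smul_eq_C_mul, map_smul, map_smul]
    simp; ring
  have h3 : Lam lam l (gT lam k) = if k = l then 1 / Real.Gamma (lam + 1) else 0 := by
    split_ifs with h
    · rw [h, Lam_gT_self _ hl]
    · exact Lam_gT_ne _ hl _ _ h
  by_cases h0 : (k:ℝ) + lam = 0
  · rw [hu h0, h3, eq_neg_of_add_eq_zero_left (hu h0)]
    split_ifs
    · push_cast; ring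
    · simp
  · have h0' : (k:ℂ) + lam ≠ 0 := by exact_mod_cast h0
    rw [h3] at h1 h2 ⊢
    generalize 1 / Real.Gamma (lam + 1) = g at *
    apply mul_left_cancel₀ h0'
    apply_fun ((↑) : ℝ → ℂ) at h1 h2
    push_cast at *
    split_ifs at * with h
    · subst h
      linear_combination (u + (-1)^k) * h1 - (u + (-1)^k) * h2
    · simp only [Complex.ofReal_zero, mul_zero] at *
      linear_combination (u + (-1)^k) * h1 - (u + (-1)^k) * h2

lemma eig2 (u : ℂ) (lam : ℝ) (hl : 0 ≤ lam) (k l : ℕ) (hu : (k:ℝ) + lam = 0 → u + (-1)^k = 0) :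
    (u + (-1)^k) * (Lam lam (l+1) (gp lam k) : ℂ) - (u - (-1)^k) * (Lam lam (l+1) (gT lam k) : ℂ)
     - 2 * (u + (-1)^k) * (Lam lam l (gQ lam k) - Lam lam (l+1) (X * gQ lam k) : ℝ)
    = if k = l + 1 then - 2 * u * ((1 / Real.Gamma (lam + 1) : ℝ) : ℂ) else 0 := by
  have h1 : ((k:ℝ) + lam) * Lam lam (l+1) (gp lam k) = lam * Lam lam (l+1) (gT lam k) := by
    have := congrArg (Lam lam (l+1)) (gp_gT lam k)
    rwa [show ((k:ℝ[X]) + C lam) = C ((k:ℝ) + lam) by simp, ← smul_eq_C_mul, ← smul_eq_C_mul,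
      map_smul, map_smul] at this
  have h2 : 2 * ((k:ℝ) + lam) * (Lam lam l (gQ lam k) - Lam lam (l+1) (X * gQ lam k)) =
      (l + 2*lam + 1) * Lam lam (l+1) (gT lam k) := by
    rw [← Lam_B _ hl, gT_deriv, show 2 * ((k:ℝ[X]) + C lam) = C (2 * ((k:ℝ) + lam)) by simp [hC2],
      mul_left_comm, ← smul_eq_C_mul, ← smul_eq_C_mul, map_smul, map_smul]
    simp; ring
  have h3 : Lam lam (l+1) (gT lam k) = if k = l + 1 then 1 / Real.Gamma (lam + 1) else 0 := by
    split_ifs with h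
    · rw [h, Lam_gT_self _ hl]
    · exact Lam_gT_ne _ hl _ _ h
  by_cases h0 : (k:ℝ) + lam = 0
  · have hk : (k:ℝ) = 0 := by have := Nat.cast_nonneg (α := ℝ) k; linarith
    have hk : k = 0 := by exact_mod_cast hk
    rw [hu h0, h3, if_neg (by omega), if_neg (by omega)]
    simp
  · have h0' : (k:ℂ) + lam ≠ 0 := by exact_mod_cast h0
    rw [h3] at h1 h2 ⊢
    generalize 1 / Real.Gamma (lam + 1) = g at *
    apply mul_left_cancel₀ h0'
    apply_fun ((↑) : ℝ → ℂ) at h1 h2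
    push_cast at *
    split_ifs at * with h
    · subst h
      push_cast at *
      linear_combination (u + (-1)^(l+1)) * h1 - (u + (-1)^(l+1)) * h2
    · simp only [Complex.ofReal_zero, mul_zero] at *
      linear_combination (u + (-1)^k) * h1 - (u + (-1)^k) * h2
end L
end Part2

section Part3
/-- generalized binomial `binom(j+a, j-i)` -/
def bj (a : ℝ) (j i : ℕ) : ℝ :=
  if i ≤ j then Real.Gamma ((j:ℝ)+a+1) / (Real.Gamma ((i:ℝ)+a+1) * ((j-i).factorial:ℝ)) else 0

lemma bj_diag (a : ℝ) (i d : ℕ) : bj a (i+d) i =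
    Real.Gamma ((i:ℝ)+d+a+1) / (Real.Gamma ((i:ℝ)+a+1) * (d.factorial:ℝ)) := by
  rw [bj, if_pos (by omega), Nat.add_sub_cancel_left]; push_cast; rfl

lemma bj_self (a : ℝ) (ha : 0 ≤ a) (i : ℕ) : bj a i i = 1 := by
  have := bj_diag a i 0
  simp at this
  rw [this, div_self (Real.Gamma_pos_of_pos (by positivity)).ne']

lemma bj_zero (a : ℝ) {i j : ℕ} (h : j < i) : bj a j i = 0 := if_neg (by omega)

lemma bj_up (a : ℝ) (ha : 0 ≤ a) (i d : ℕ) :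
    ((d:ℝ)+1) * bj a (i+d+1) i = (i+d+a+1) * bj a (i+d) i := by
  rw [show i+d+1 = i+(d+1) by ring, bj_diag, bj_diag, Nat.factorial_succ]
  have e : (i:ℝ)+(d+1:ℕ)+a+1 = ((i:ℝ)+d+a+1)+1 := by push_cast; ring
  have h1 := (Real.Gamma_pos_of_pos (show 0 < (i:ℝ)+d+a+1 by positivity)).ne'
  have h2 := (Real.Gamma_pos_of_pos (show 0 < (i:ℝ)+a+1 by positivity)).ne'
  rw [e, Real.Gamma_add_one (by positivity)]
  have := Nat.factorial_ne_zero d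
  push_cast
  field_simp

lemma bj_down (a : ℝ) (ha : 0 ≤ a) (i d : ℕ) :
    ((d:ℝ)+1) * bj a (i+d+1) i = (i+a+1) * bj a (i+d+1) (i+1) := by
  rw [show i+d+1 = (i+1)+d by ring, bj_diag, show i+1+d = i+(d+1) by ring, bj_diag,
    Nat.factorial_succ]
  have e : (i:ℝ)+(d+1:ℕ)+a+1 = ((i+1:ℕ):ℝ)+d+a+1 := by push_cast; ring
  have e2 : ((i+1:ℕ):ℝ)+a+1 = ((i:ℝ)+a+1)+1 := by push_cast; ring
  have h2 := (Real.Gamma_pos_of_pos (show 0 < (i:ℝ)+a+1 by positivity)).ne'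
  rw [e, e2, Real.Gamma_add_one (s := (i:ℝ)+a+1) (by positivity)]
  have := Nat.factorial_ne_zero d
  push_cast
  field_simp

lemma bj_rec (a : ℝ) (ha : 0 ≤ a) (j i : ℕ) :
    ((j:ℝ)+2) * bj a (j+2) (i+1) = (a+1+2*(i+1)) * bj a (j+1) (i+1) + (i+1) * bj a (j+1) i
      + (j+1+a) * bj a j (i+1) := by
  rcases lt_trichotomy j i with h | h | h
  · rcases Nat.lt_or_ge (j+1) i with h' | h'
    · rw [bj_zero _ (by omega), bj_zero _ (by omega), bj_zero _ (by omega), bj_zero _ (by omega)]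
      simp
    · obtain rfl : i = j+1 := by omega
      rw [bj_self a ha, bj_zero _ (by omega), bj_self a ha, bj_zero _ (by omega)]
      push_cast; ring
  · subst h
    have h1 := bj_up a ha j 0
    have h2 := bj_up a ha (j+1) 0
    simp at h1 h2
    rw [h1, h2, bj_self a ha, bj_self a ha, bj_zero _ (by omega)]
    ring
  · obtain ⟨d, rfl⟩ : ∃ d, j = i+1+d := ⟨j-(i+1), by omega⟩
    have h1 := bj_up a ha (i+1) d
    have h2 := bj_up a ha (i+1) (d+1)
    have h3 := bj_down a ha i (d+1)
    rw [show i + (d+1) + 1 = i+1+d+1 by ring] at h3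
    rw [show i+1+(d+1)+1 = i+1+d+2 by ring, show i+1+(d+1) = i+1+d+1 by ring] at h2
    push_cast at *
    have h4 : (d:ℝ)+2 ≠ 0 := by positivity
    have h5 : (d:ℝ)+1 ≠ 0 := by positivity
    apply mul_left_cancel₀ h4
    linear_combination (i+1+d+2 : ℝ) * h2 - (i+1:ℝ) * h3 + ((d:ℝ)+2)*h1

lemma bj_rec0 (a : ℝ) (ha : 0 ≤ a) (j : ℕ) :
    ((j:ℝ)+2) * bj a (j+2) 0 = (a+1) * bj a (j+1) 0 + (j+1+a) * bj a j 0 := by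
  have h1 := bj_up a ha 0 j
  have h2 := bj_up a ha 0 (j+1)
  simp only [zero_add] at h1 h2
  push_cast at *
  linear_combination h2 + h1

def Pj (a : ℝ) (c : ℕ → ℝ) (j : ℕ) : ℝ := ∑ i ∈ Finset.range (j+1), bj a j i * c i

lemma Pj_ext (a : ℝ) (c : ℕ → ℝ) (j N : ℕ) (h : j + 1 ≤ N) :
    Pj a c j = ∑ i ∈ Finset.range N, bj a j i * c i := by
  apply Finset.sum_subset (Finset.range_mono h)
  intro i _ hi
  rw [bj_zero _ (by simpa using hi), zero_mul]

lemma Pj_rec (a : ℝ) (ha : 0 ≤ a) (σ : ℝ) (c : ℕ → ℝ)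
    (hc : ∀ i : ℕ, ((i:ℝ)+1) * c (i+1) = 2*(σ - i) * c i) (j : ℕ) :
    ((j:ℝ)+2) * Pj a c (j+2) = (a+1+2*σ) * Pj a c (j+1) + (j+1+a) * Pj a c j := by
  have h1 : Pj a c (j+1) = ∑ i ∈ Finset.range (j+2), bj a (j+1) i * c i := rfl
  rw [Pj_ext a c (j+2) (j+2+1) (by omega), Pj_ext a c j (j+2+1) (by omega)]
  have h2 : (a+1+2*σ) * Pj a c (j+1) = (a+1) * ∑ i ∈ Finset.range (j+2+1), bj a (j+1) i * c i
      + ∑ i ∈ Finset.range (j+2), 2 * i * bj a (j+1) i * c i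
      + ∑ i ∈ Finset.range (j+2), (i+1) * bj a (j+1) i * c (i+1) := by
    rw [← Pj_ext a c (j+1) (j+2+1) (by omega), h1, Finset.mul_sum, Finset.mul_sum,
      ← Finset.sum_add_distrib, ← Finset.sum_add_distrib]
    refine Finset.sum_congr rfl fun i _ => ?_
    linear_combination (-bj a (j+1) i) * hc i
  have h3 : ∑ i ∈ Finset.range (j+2), 2 * (i:ℝ) * bj a (j+1) i * c i =
      ∑ i ∈ Finset.range (j+2), 2 * ((i:ℝ)+1) * bj a (j+1) (i+1) * c (i+1) := by
    have e1 := Finset.sum_range_succ' (fun i : ℕ => 2 * (i:ℝ) * bj a (j+1) i * c i) (j+2)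
    have e2 := Finset.sum_range_succ (fun i : ℕ => 2 * (i:ℝ) * bj a (j+1) i * c i) (j+2)
    rw [bj_zero a (show j+1 < j+2 by omega)] at e2
    rw [e2] at e1
    push_cast at e1
    simpa using e1
  rw [h2, h3, Finset.sum_range_succ' _ (j+2), Finset.sum_range_succ' _ (j+2),
    Finset.sum_range_succ' _ (j+2), mul_add,
    mul_add, mul_add, Finset.mul_sum, Finset.mul_sum, Finset.mul_sum]
  have h0 := bj_rec0 a ha j
  have : ∑ i ∈ Finset.range (j+2), ((j:ℝ)+2) * (bj a (j+2) (i+1) * c (i+1)) =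
    ∑ i ∈ Finset.range (j+2), (a+1) * (bj a (j+1) (i+1) * c (i+1)) +
    ∑ i ∈ Finset.range (j+2), 2 * ((i:ℝ)+1) * bj a (j+1) (i+1) * c (i+1) +
    ∑ i ∈ Finset.range (j+2), (i+1) * bj a (j+1) i * c (i+1) +
    ∑ i ∈ Finset.range (j+2), (j+1+a) * (bj a j (i+1) * c (i+1)) := by
    rw [← Finset.sum_add_distrib, ← Finset.sum_add_distrib, ← Finset.sum_add_distrib]
    refine Finset.sum_congr rfl fun i _ => ?_
    linear_combination (c (i+1)) * bj_rec a ha j i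
  rw [this]
  linear_combination c 0 * h0

lemma Pj_symm (a : ℝ) (ha : 0 ≤ a) (σ σ' : ℝ) (hs : σ + σ' = -a-1) (c c' : ℕ → ℝ)
    (hc : ∀ i : ℕ, ((i:ℝ)+1) * c (i+1) = 2*(σ - i) * c i)
    (hc' : ∀ i : ℕ, ((i:ℝ)+1) * c' (i+1) = 2*(σ' - i) * c' i) (h0 : c 0 = 1) (h0' : c' 0 = 1) (j : ℕ) :
    Pj a c' j = (-1)^j * Pj a c j := by
  induction j using Nat.twoStepInduction with
  | zero => simp [Pj, h0, h0']
  | one =>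
    have h1 := bj_up a ha 0 0
    have h2 := hc 0
    have h3 := hc' 0
    have h4 := bj_self a ha 1
    have h5 := bj_self a ha 0
    simp [h0, h0', h5] at h1 h2 h3
    simp [Pj, Finset.sum_range_succ, h0, h0', h1, h2, h3, h4]
    linear_combination 2 * hs
  | more j h1 h2 =>
    have h3 := Pj_rec a ha σ c hc j
    have h4 := Pj_rec a ha σ' c' hc' j
    have h5 : (j:ℝ)+2 ≠ 0 := by positivity
    apply mul_left_cancel₀ h5
    rw [h4, h1, h2]
    linear_combination (-(-1)^j) * h3 - 2 * (-1)^j * Pj a c (j+1) * hs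

lemma hasSum_choose (x : ℝ) (i : ℕ) :
    HasSum (fun s : ℕ => x^s / s.factorial * (s.choose i : ℝ)) (x^i / i.factorial * Real.exp x) := by
  have h1 : HasSum (fun s : ℕ => x^s / s.factorial) (Real.exp x) := by
    have := NormedSpace.expSeries_div_hasSum_exp x
    rwa [← Real.exp_eq_exp_ℝ] at this
  have h2 := h1.mul_left (x^i / i.factorial)
  rw [← (add_right_injective i).hasSum_iff]
  · refine (congrArg (fun f => HasSum f _) (funext fun s => ?_)).mpr h2
    simp only [Function.comp]
    have := Nat.add_choose_mul_factorial_mul_factorial i s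
    rw [Nat.choose_symm_add.symm] at this
    have h3 : ((i+s).choose i : ℝ) * i.factorial * s.factorial = (i+s).factorial := by
      exact_mod_cast this
    have := Nat.factorial_ne_zero i
    have := Nat.factorial_ne_zero s
    rw [← h3]
    have h4 : ((i+s).choose i : ℝ) ≠ 0 := by
      exact_mod_cast (Nat.choose_pos (by omega)).ne'
    rw [pow_add]
    field_simp
  · intro s hs
    rw [Nat.choose_eq_zero_of_lt]; · simp
    by_contra h
    exact hs ⟨s - i, by simp; omega⟩

/-- coefficients of the Laguerre polynomial -/
def lc (a : ℝ) (j i : ℕ) : ℝ := (-1 : ℝ)^i * (Real.Gamma ((j:ℝ) + a + 1) /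
  (Real.Gamma ((i:ℝ) + a + 1) * ((j - i).factorial : ℝ))) / (i.factorial : ℝ)

lemma lag_eq (a : ℝ) (j : ℕ) (t : ℝ) : lag a j t = ∑ i ∈ Finset.range (j+1), lc a j i * t^i := by
  unfold lag lc
  refine Finset.sum_congr rfl fun i _ => ?_
  ring

lemma hankel (a : ℝ) (ha : 0 ≤ a) (j : ℕ) (t : ℝ) :
    HasSum (fun s : ℕ => (-t/2)^s / s.factorial * ∑ i ∈ Finset.range (j+1),
      lc a j i * (2^i * Real.Gamma ((s:ℝ) + i + a + 1) / Real.Gamma ((s:ℝ)+a+1)))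
      ((-1)^j * (lag a j t * Real.exp (-t/2))) := by
  have key : ∀ s : ℕ, ∑ i ∈ Finset.range (j+1),
      lc a j i * (2^i * Real.Gamma ((s:ℝ) + i + a + 1) / Real.Gamma ((s:ℝ)+a+1)) =
      (-1)^j * ∑ i ∈ Finset.range (j+1), bj a j i * (2^i * (s.choose i : ℝ)) := by
    intro s
    have hG := (Real.Gamma_pos_of_pos (show 0 < (s:ℝ)+a+1 by positivity)).ne'
    have := Pj_symm a ha s (-a-1-s) (by ring) (fun i => 2^i * (s.choose i : ℝ))
      (fun i => (-1)^i / i.factorial * (2^i * Real.Gamma ((s:ℝ) + i + a + 1) / Real.Gamma ((s:ℝ)+a+1)))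
      (fun i => ?_) (fun i => ?_) (by simp) (by simp [hG]) j
    · unfold Pj at this
      rw [← this]
      refine Finset.sum_congr rfl fun i hi => ?_
      rw [bj, if_pos (by simpa [Nat.lt_succ_iff] using hi)]
      unfold lc; ring
    · have h : ((s.choose (i+1) : ℕ):ℝ) * (i+1) = s.choose i * (s - i) := by
        rcases le_or_gt i s with h | h
        · have := Nat.choose_succ_right_eq s i
          rw [← Nat.cast_sub h]; exact_mod_cast this
        · rw [Nat.choose_eq_zero_of_lt h, Nat.choose_eq_zero_of_lt (by omega)]; simp
      rw [pow_succ]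
      linear_combination 2^i * 2 * h
    · have e : (s:ℝ) + (i+1:ℕ) + a + 1 = (s + i + a + 1) + 1 := by push_cast; ring
      rw [e, Real.Gamma_add_one (by positivity), Nat.factorial_succ]
      have := Nat.factorial_ne_zero i
      push_cast
      field_simp
      ring
  simp_rw [key]
  rw [lag_eq, Finset.sum_mul, Finset.mul_sum]
  simp_rw [Finset.mul_sum]
  apply hasSum_sum
  intro i hi
  have h := (hasSum_choose (-t/2) i).mul_left ((-1)^j * bj a j i * 2^i)
  have e2 : (-1) ^ j * (lc a j i * t ^ i * Real.exp (-t / 2)) =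
    (-1) ^ j * bj a j i * 2 ^ i * ((-t / 2) ^ i / i.factorial * Real.exp (-t / 2)) := by
    rw [bj, if_pos (by simpa [Nat.lt_succ_iff] using hi)]
    unfold lc
    rw [show (-t/2)^i = (-1)^i * t^i / 2^i by rw [div_pow, neg_pow]]
    field_simp
  rw [e2]
  exact (congrArg (fun f => HasSum f _) (funext fun s => by ring)).mpr h
end Part3

section Part4
set_option linter.unusedSectionVars false
section G
variable {m : ℕ} {V W : Type*} [NormedAddCommGroup V] [NormedSpace ℝ V]
  [NormedAddCommGroup W] [NormedSpace ℝ W]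

def ga (x : Fin m → ℝ) : ℝ := Real.exp (-(ip x x)/2)
def S1 (x : Fin m → ℝ) : ℝ := ∑ i, |x i|

lemma S1_nonneg (x : Fin m → ℝ) : 0 ≤ S1 x := Finset.sum_nonneg fun _ _ => abs_nonneg _

lemma le_S1 (x : Fin m → ℝ) (i : Fin m) : |x i| ≤ S1 x :=
  Finset.single_le_sum (f := fun i => |x i|) (fun _ _ => abs_nonneg _) (Finset.mem_univ i)

lemma norm_le_S1 (x : Fin m → ℝ) : ‖x‖ ≤ S1 x :=
  (pi_norm_le_iff_of_nonneg (S1_nonneg x)).2 fun i => le_S1 x i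

/-- exponential growth -/
def EG (f : (Fin m → ℝ) → V) : Prop :=
  ∃ C c : ℝ, 0 ≤ C ∧ 0 ≤ c ∧ ∀ x, ‖f x‖ ≤ C * Real.exp (c * S1 x)

lemma EG.mono {f : (Fin m → ℝ) → V} {g : (Fin m → ℝ) → W} (hg : EG g) (h : ∀ x, ‖f x‖ ≤ ‖g x‖) :
    EG f := by
  obtain ⟨C, c, h1, h2, h3⟩ := hg
  exact ⟨C, c, h1, h2, fun x => (h x).trans (h3 x)⟩

lemma EG.const (v : V) : EG (fun _ : Fin m → ℝ => v) :=
  ⟨‖v‖, 0, norm_nonneg _, le_rfl, fun x => by simp⟩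

lemma EG.add {f g : (Fin m → ℝ) → V} (hf : EG f) (hg : EG g) : EG (fun x => f x + g x) := by
  obtain ⟨C, c, h1, h2, h3⟩ := hf
  obtain ⟨C', c', h1', h2', h3'⟩ := hg
  refine ⟨C + C', max c c', by positivity, by positivity, fun x => (norm_add_le _ _).trans ?_⟩
  rw [add_mul]
  have hS := S1_nonneg x
  refine add_le_add ((h3 x).trans ?_) ((h3' x).trans ?_)
  · gcongr; exact le_max_left _ _
  · gcongr; exact le_max_right _ _

lemma EG.smul {a : (Fin m → ℝ) → ℝ} {g : (Fin m → ℝ) → V} (hf : EG a) (hg : EG g) :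
    EG (fun x => a x • g x) := by
  obtain ⟨C, c, h1, h2, h3⟩ := hf
  obtain ⟨C', c', h1', h2', h3'⟩ := hg
  refine ⟨C * C', c + c', by positivity, by positivity, fun x => ?_⟩
  rw [norm_smul, add_mul, Real.exp_add]
  calc _ ≤ (C * Real.exp (c * S1 x)) * (C' * Real.exp (c' * S1 x)) :=
        mul_le_mul (h3 x) (h3' x) (norm_nonneg _) (by positivity)
    _ = _ := by ring

lemma EG.clm {f : (Fin m → ℝ) → V} (hf : EG f) (L : V →L[ℝ] W) : EG (fun x => L (f x)) := by
  obtain ⟨C, c, h1, h2, h3⟩ := hf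
  refine ⟨‖L‖ * C, c, by positivity, by positivity, fun x => (L.le_opNorm _).trans ?_⟩
  rw [mul_assoc]; gcongr; exact h3 x

lemma EG.sum {ι : Type*} (s : Finset ι) {f : ι → (Fin m → ℝ) → V} (hf : ∀ i ∈ s, EG (f i)) :
    EG (fun x => ∑ i ∈ s, f i x) := by
  classical
  induction s using Finset.induction_on with
  | empty => simpa using EG.const (0:V)
  | insert a s ha ih =>
    simp only [Finset.sum_insert ha]
    exact (hf a (by simp)).add (ih fun i hi => hf i (by simp [hi]))

lemma EG.expS (c : ℝ) (hc : 0 ≤ c) : EG (fun x : Fin m → ℝ => Real.exp (c * S1 x)) :=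
  ⟨1, c, zero_le_one, hc, fun x => by simp⟩

lemma EG.sOne : EG (fun x : Fin m → ℝ => S1 x) :=
  ⟨1, 1, zero_le_one, zero_le_one, fun x => by
    rw [Real.norm_of_nonneg (S1_nonneg x), one_mul, one_mul]
    linarith [Real.add_one_le_exp (CliffordFourier.S1 x)]⟩

lemma EG.coord (i : Fin m) : EG (fun x : Fin m → ℝ => x i) :=
  EG.sOne.mono fun x => by
    rw [Real.norm_of_nonneg (S1_nonneg x)]; exact le_S1 x i

lemma EG.pow {a : (Fin m → ℝ) → ℝ} (hf : EG a) (n : ℕ) : EG (fun x => a x ^ n) := by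
  induction n with
  | zero => simpa using EG.const (1:ℝ)
  | succ n ih => simpa only [pow_succ, smul_eq_mul] using ih.smul hf

lemma EG.inn (y : Fin m → ℝ) : EG (fun x : Fin m → ℝ => ip x y) :=
  EG.sum _ fun i _ => by simpa using (EG.coord i).smul (EG.const (y i))

lemma EG.ipself : EG (fun x : Fin m → ℝ => ip x x) :=
  EG.sum _ fun i _ => (EG.coord i).smul (EG.coord i)

lemma cont_ip (y : Fin m → ℝ) : Continuous (fun x : Fin m → ℝ => ip x y) := by
  unfold CliffordFourier.ip; fun_prop
lemma cont_ipself : Continuous (fun x : Fin m → ℝ => ip x x) := by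
  unfold CliffordFourier.ip; fun_prop
lemma cont_ga : Continuous (fun x : Fin m → ℝ => ga x) := by
  unfold ga
  have := cont_ipself (m := m)
  fun_prop

lemma ga_prod (b : ℝ) (x : Fin m → ℝ) : Real.exp (-b * ip x x) = ∏ i, Real.exp (-b * (x i)^2) := by
  rw [← Real.exp_sum, ip, Finset.mul_sum]; congr 1
  refine Finset.sum_congr rfl fun i _ => by ring

lemma integrable_ga (b : ℝ) (hb : 0 < b) : Integrable (fun x : Fin m → ℝ => Real.exp (-b * ip x x)) := by
  simp_rw [ga_prod]
  exact Integrable.fintype_prod (f := fun _ t => Real.exp (-b * t^2))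
    (fun _ => integrable_exp_neg_mul_sq hb)

lemma integral_ga : ∫ x : Fin m → ℝ, ga x = (2 * Real.pi) ^ ((m:ℝ)/2) := by
  have h : ∀ x : Fin m → ℝ, ga x = ∏ i, Real.exp (-(1/2) * (x i)^2) := fun x => by
    rw [← ga_prod, ga]; congr 1; ring
  simp_rw [h]
  rw [integral_fintype_prod_volume_eq_prod (fun _ t => Real.exp (-(1/2) * t^2))]
  rw [integral_gaussian, Finset.prod_const, Finset.card_univ, Fintype.card_fin]
  rw [Real.sqrt_eq_rpow, ← Real.rpow_mul_natCast (by positivity)]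
  congr 1 <;> ring

lemma EG.integrable {f : (Fin m → ℝ) → V} (hf : EG f) (hm : AEStronglyMeasurable f volume) :
    Integrable (fun x => ga x • f x) := by
  obtain ⟨C, c, h1, h2, h3⟩ := hf
  refine ((integrable_ga (m := m) (1/4) (by norm_num)).const_mul
    (C * Real.exp (m * c^2))).mono' (cont_ga.aestronglyMeasurable.smul hm) ?_
  refine Filter.Eventually.of_forall fun x => ?_
  rw [norm_smul, ga, Real.norm_of_nonneg (Real.exp_pos _).le]
  have h4 : c * S1 x ≤ m * c^2 + 1/4 * ip x x := by
    have : (m:ℝ) * c^2 = ∑ i : Fin m, c^2 := by simp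
    rw [this, S1, ip, Finset.mul_sum, Finset.mul_sum, ← Finset.sum_add_distrib]
    refine Finset.sum_le_sum fun i _ => ?_
    have := sq_abs (x i)
    nlinarith [sq_nonneg (c - |x i|/2)]
  calc _ ≤ Real.exp (-(ip x x)/2) * (C * Real.exp (c * S1 x)) := by gcongr; exact h3 x
    _ ≤ Real.exp (-(ip x x)/2) * (C * Real.exp (m * c^2 + 1/4 * ip x x)) := by gcongr
    _ = C * (Real.exp (-(ip x x)/2) * Real.exp (m * c^2 + 1/4 * ip x x)) := by ring
    _ = C * (Real.exp (m * c^2) * Real.exp (-(1/4) * ip x x)) := by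
      rw [← Real.exp_add, ← Real.exp_add]; congr 2; ring
    _ = _ := by ring

/-- differentiable functions of exponential growth, with their partial derivatives -/
structure DG (f : (Fin m → ℝ) → V) (f' : Fin m → (Fin m → ℝ) → V) : Prop where
  diff : Differentiable ℝ f
  eq : ∀ i x, fderiv ℝ f x (Pi.single i 1) = f' i x
  cont : ∀ i, Continuous (f' i)
  eg : EG f
  eg' : ∀ i, EG (f' i)

lemma DG.smul {a : (Fin m → ℝ) → ℝ} {a'} {f : (Fin m → ℝ) → V} {f'} (ha : DG a a') (hf : DG f f') :
    DG (fun x => a x • f x) (fun i x => a x • f' i x + a' i x • f x) where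
  diff := ha.diff.smul hf.diff
  eq i x := by
    rw [fderiv_fun_smul (ha.diff x) (hf.diff x)]
    simp [ha.eq, hf.eq]
  cont i := (ha.diff.continuous.smul (hf.cont i)).add ((ha.cont i).smul hf.diff.continuous)
  eg := ha.eg.smul hf.eg
  eg' i := (ha.eg.smul (hf.eg' i)).add ((ha.eg' i).smul hf.eg)

lemma DG.clm {f : (Fin m → ℝ) → V} {f'} (hf : DG f f') (L : V →L[ℝ] W) :
    DG (fun x => L (f x)) (fun i x => L (f' i x)) where
  diff := L.differentiable.comp hf.diff
  eq i x := by
    have := (L.hasFDerivAt.comp x (hf.diff x).hasFDerivAt).fderiv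
    simp only [Function.comp_def] at this
    rw [this]; simp [hf.eq]
  cont i := L.continuous.comp (hf.cont i)
  eg := hf.eg.clm L
  eg' i := (hf.eg' i).clm L

lemma DG.sum {ι : Type*} (s : Finset ι) {f : ι → (Fin m → ℝ) → V}
    {f' : ι → Fin m → (Fin m → ℝ) → V}
    (hf : ∀ i ∈ s, DG (f i) (f' i)) :
    DG (fun x => ∑ i ∈ s, f i x) (fun j x => ∑ i ∈ s, f' i j x) where
  diff := Differentiable.fun_sum fun i hi => (hf i hi).diff
  eq j x := by
    rw [fderiv_fun_sum fun i hi => (hf i hi).diff x, ContinuousLinearMap.sum_apply]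
    exact Finset.sum_congr rfl fun i hi => (hf i hi).eq j x
  cont j := continuous_finsetSum _ fun i hi => (hf i hi).cont j
  eg := EG.sum _ fun i hi => (hf i hi).eg
  eg' j := EG.sum _ fun i hi => (hf i hi).eg' j

lemma DG.congr {f : (Fin m → ℝ) → V} {f' g'} (hf : DG f f') (h : ∀ i x, f' i x = g' i x) :
    DG f g' := by
  have : f' = g' := by ext i x; exact h i x
  rwa [← this]

lemma DG.coord (i : Fin m) : DG (fun x : Fin m → ℝ => x i) (fun j _ => if i = j then 1 else 0) where
  diff := by fun_prop
  eq j x := by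
    have := ((ContinuousLinearMap.proj (R := ℝ) (φ := fun _ : Fin m => ℝ) i).hasFDerivAt (x := x)).fderiv
    have h2 : (fun x : Fin m → ℝ => x i) = (ContinuousLinearMap.proj (R := ℝ) (φ := fun _ : Fin m => ℝ) i) := rfl
    rw [h2, this]
    simp [Pi.single_apply]
  cont j := continuous_const
  eg := EG.coord i
  eg' j := EG.const _

lemma DG.const (v : V) : DG (fun _ : Fin m → ℝ => v) (fun _ _ => 0) where
  diff := by fun_prop
  eq j x := by simp
  cont j := continuous_const
  eg := EG.const _
  eg' j := EG.const _

lemma DG.inn (y : Fin m → ℝ) : DG (fun x : Fin m → ℝ => ip x y) (fun j _ => y j) := by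
  refine (DG.sum Finset.univ (fun i _ => (DG.coord i).smul (DG.const (y i)))).congr fun i x => ?_
  simp

lemma DG.ipself : DG (fun x : Fin m → ℝ => CliffordFourier.ip x x) (fun j x => 2 * x j) := by
  refine (DG.sum Finset.univ (fun i _ => (DG.coord i).smul (DG.coord i))).congr fun i x => ?_
  simp [Finset.sum_add_distrib]; ring

lemma DG.pow {a : (Fin m → ℝ) → ℝ} {a'} (ha : DG a a') (n : ℕ) :
    DG (fun x => a x ^ n) (fun i x => n * a x ^ (n-1) * a' i x) where
  diff := ha.diff.pow n
  eq i x := by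
    rw [fderiv_fun_pow n (ha.diff x)]
    simp [ha.eq]
  cont i := by
    have h1 := ha.diff.continuous
    have h2 := ha.cont i
    fun_prop
  eg := ha.eg.pow n
  eg' i := ((EG.const (n:ℝ)).smul (ha.eg.pow (n-1))).smul (ha.eg' i)

lemma DG.integrable {f : (Fin m → ℝ) → V} {f'} (hf : DG f f') : Integrable (fun x => ga x • f x) :=
  hf.eg.integrable hf.diff.continuous.aestronglyMeasurable

lemma ga_fderiv (x : Fin m → ℝ) (i : Fin m) :
    fderiv ℝ ga x (Pi.single i 1) = - (x i * ga x) := by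
  have h := (DG.ipself (m := m)).diff x
  have h1 : HasFDerivAt (fun x : Fin m → ℝ => -(ip x x)/2) ((-(1/2:ℝ)) • fderiv ℝ (fun x : Fin m → ℝ => ip x x) x) x := by
    refine (h.hasFDerivAt.const_mul (-(1/2:ℝ))).congr_of_eventuallyEq
      (Filter.Eventually.of_forall fun z => by simp; ring)
  have h2 := h1.exp.fderiv
  have : (ga : (Fin m → ℝ) → ℝ) = fun x => Real.exp (-(ip x x)/2) := rfl
  rw [this, h2]
  simp [(DG.ipself (m := m)).eq]
  ring

/-- Gaussian integration by parts -/
lemma ibp {f : (Fin m → ℝ) → V} {f'} (hf : DG f f') (i : Fin m) :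
    ∫ x, ga x • (x i • f x) = ∫ x, ga x • f' i x := by
  have h := integral_smul_fderiv_eq_neg_fderiv_smul_of_integrable (μ := volume)
    (f := (ga : (Fin m → ℝ) → ℝ)) (g := f) (v := Pi.single i 1) ?_ ?_ ?_ ?_ ?_
  · simp only [hf.eq, ga_fderiv] at h
    rw [h, ← integral_neg]
    congr 1; ext x
    rw [neg_smul, neg_neg, mul_comm, mul_smul]
  · simp only [ga_fderiv]
    have := ((DG.coord i).smul hf).integrable.neg
    refine this.congr (Filter.Eventually.of_forall fun x => ?_)
    simp only [Pi.neg_apply, neg_smul]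
    rw [smul_smul, mul_comm]
  · simp only [hf.eq]
    exact (hf.eg' i).integrable (hf.cont i).aestronglyMeasurable
  · exact hf.integrable
  · intro x _
    have h := (DG.ipself (m := m)).diff x
    unfold ga; fun_prop
  · intro x _; exact hf.diff x

lemma euler_id {f : (Fin m → ℝ) → V} {f'} (hf : DG f f') (d : ℕ)
    (hh : ∀ c : ℝ, ∀ x, f (c • x) = c^d • f x) (x : Fin m → ℝ) :
    ∑ i, x i • f' i x = (d:ℝ) • f x := by
  have h1 : HasDerivAt (fun c : ℝ => f (c • x)) (fderiv ℝ f x x) 1 := by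
    have ha : HasDerivAt (fun c : ℝ => c • x) x 1 := by
      simpa using (hasDerivAt_id (1:ℝ)).smul_const x
    have hb : HasFDerivAt f (fderiv ℝ f x) ((1:ℝ) • x) := by
      rw [one_smul]; exact (hf.diff x).hasFDerivAt
    exact hb.comp_hasDerivAt 1 ha
  have h2 : HasDerivAt (fun c : ℝ => f (c • x)) ((d:ℝ) • f x) 1 := by
    simp only [hh]
    simpa using (hasDerivAt_pow d (1:ℝ)).smul_const (f x)
  rw [h2.unique h1]
  have hx : x = ∑ i, x i • (Pi.single i (1:ℝ) : Fin m → ℝ) := by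
    ext j; simp [Finset.sum_apply, Pi.single_apply]
  have h3 : fderiv ℝ f x (∑ i, x i • (Pi.single i (1:ℝ) : Fin m → ℝ)) = ∑ i, x i • f' i x := by
    rw [map_sum]
    refine Finset.sum_congr rfl fun i _ => ?_
    rw [map_smul, hf.eq]
  rw [← h3, ← hx]

lemma radial {f : (Fin m → ℝ) → V} {f'} (hf : DG f f') (d : ℕ)
    (hh : ∀ c : ℝ, ∀ x, f (c • x) = c^d • f x) :
    ∫ x, ga x • (ip x x • f x) = ((m:ℝ) + d) • ∫ x, ga x • f x := by
  have h1 : ∀ i : Fin m, DG (fun x => x i • f x) _ := fun i => (DG.coord i).smul hf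
  have h2 : ∀ x : Fin m → ℝ, ga x • (ip x x • f x) = ∑ i, ga x • (x i • (x i • f x)) := fun x => by
    rw [← Finset.smul_sum, ip, Finset.sum_smul]; simp only [mul_smul]
  simp_rw [h2]
  rw [integral_finsetSum _ fun i _ => ((DG.coord i).smul (h1 i)).integrable]
  rw [Finset.sum_congr rfl fun i _ => ibp (h1 i) i]
  rw [← integral_finsetSum _ fun i _ => ((h1 i).eg' i).integrable ((h1 i).cont i).aestronglyMeasurable,
    ← integral_smul]
  congr 1; ext x
  rw [← Finset.smul_sum, smul_comm ((m:ℝ)+d)]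
  congr 1
  rw [Finset.sum_add_distrib, euler_id hf d hh, add_smul, add_comm]
  simp [Nat.cast_smul_eq_nsmul]

lemma hom_rs {f : (Fin m → ℝ) → V} (d s : ℕ)
    (hh : ∀ c : ℝ, ∀ x, f (c • x) = c^d • f x) (c : ℝ) (x : Fin m → ℝ) :
    (ip (c • x) (c • x))^s • f (c • x) = c^(d + 2*s) • ((ip x x)^s • f x) := by
  have : ip (c • x) (c • x) = c^2 * ip x x := by
    simp only [ip, Finset.mul_sum]; refine Finset.sum_congr rfl fun i _ => ?_
    simp; ring
  rw [this, hh, smul_smul, smul_smul]; congr 1; ring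

lemma radial_pow {f : (Fin m → ℝ) → V} {f'} (hf : DG f f') (d : ℕ)
    (hm : 2 ≤ m) (hh : ∀ c : ℝ, ∀ x, f (c • x) = c^d • f x) (s : ℕ) :
    ∫ x, ga x • ((ip x x)^s • f x) =
      (2^s * Real.Gamma (((m:ℝ)+d)/2 + s) / Real.Gamma (((m:ℝ)+d)/2)) • ∫ x, ga x • f x := by
  have hp : 0 < ((m:ℝ)+d)/2 := by
    have : (2:ℝ) ≤ m := by exact_mod_cast hm
    positivity
  have hG := (Real.Gamma_pos_of_pos hp).ne'
  induction s with
  | zero => simp [hG]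
  | succ s ih =>
    have h1 := radial ((DG.ipself.pow s).smul hf) (d+2*s) (hom_rs d s hh)
    rw [ih, smul_smul] at h1
    simp_rw [smul_smul (ip _ _), ← pow_succ'] at h1
    rw [h1]; congr 1
    have e : ((m:ℝ)+d)/2 + (s+1:ℕ) = (((m:ℝ)+d)/2 + s) + 1 := by push_cast; ring
    rw [e, Real.Gamma_add_one (by positivity)]
    push_cast
    field_simp
    ring

end G
end Part4

section Part5
set_option linter.unusedSectionVars false
section H
variable {m : ℕ} {V : Type*} [NormedAddCommGroup V] [NormedSpace ℝ V]

lemma ismul {f : (Fin m → ℝ) → V} (h : Integrable f) (c : ℝ) : Integrable (fun x => c • f x) :=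
  h.smul c

lemma EG_hom {g : (Fin m → ℝ) → V} (hg : Continuous g) (l : ℕ)
    (hh : ∀ c : ℝ, 1 ≤ c → ∀ x, ‖g (c • x)‖ ≤ c^l * ‖g x‖) : EG g := by
  obtain ⟨B, hB⟩ := (isCompact_closedBall (0 : Fin m → ℝ) 1).exists_bound_of_continuousOn
    (f := g) hg.continuousOn
  have hB0 : 0 ≤ B := (norm_nonneg _).trans (hB 0 (by simp))
  refine ⟨B, l, hB0, by positivity, fun x => ?_⟩
  by_cases hx : ‖x‖ ≤ 1
  · refine (hB x (by simpa using hx)).trans (le_mul_of_one_le_right hB0 ?_)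
    have := S1_nonneg x
    exact Real.one_le_exp (by positivity)
  · push Not at hx
    have hx0 : ‖x‖ ≠ 0 := by positivity
    have h1 := hh ‖x‖ hx.le (‖x‖⁻¹ • x)
    rw [smul_smul, mul_inv_cancel₀ hx0, one_smul] at h1
    refine h1.trans ?_
    have h2 : ‖g (‖x‖⁻¹ • x)‖ ≤ B := hB _ (by simp [norm_smul, hx0])
    have h3 : ‖x‖^l ≤ Real.exp (l * S1 x) := by
      rw [Real.exp_nat_mul]
      gcongr
      have := norm_le_S1 x
      linarith [Real.add_one_le_exp (S1 x)]
    rw [mul_comm]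
    exact mul_le_mul h2 h3 (by positivity) hB0

def vE (E : Fin m → V →L[ℝ] V) (x : Fin m → ℝ) : V →L[ℝ] V := ∑ i, x i • E i

lemma vE_apply (E : Fin m → V →L[ℝ] V) (x : Fin m → ℝ) (v : V) :
    vE E x v = ∑ i, x i • E i v := by
  simp [vE]

def CRel (E : Fin m → V →L[ℝ] V) : Prop :=
  ∀ i j v, E i (E j v) + E j (E i v) = if i = j then (-2:ℝ) • v else 0

lemma vE_rel {E : Fin m → V →L[ℝ] V} (hE : CRel E) (x y : Fin m → ℝ) (v : V) :
    vE E x (vE E y v) + vE E y (vE E x v) = (-2 * ip x y) • v := by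
  have h1 : vE E x (vE E y v) = ∑ i, ∑ j, (x i * y j) • E i (E j v) := by
    simp only [vE_apply, map_sum, map_smul, Finset.smul_sum, smul_smul]
    rw [Finset.sum_comm]
    simp only [mul_comm]
  have h2 : vE E y (vE E x v) = ∑ i, ∑ j, (x i * y j) • E j (E i v) := by
    simp only [vE_apply, map_sum, map_smul, Finset.smul_sum, smul_smul]
  rw [h1, h2, ← Finset.sum_add_distrib]
  simp only [← Finset.sum_add_distrib, ← smul_add, hE _ _ v]
  simp only [smul_ite, smul_zero, Finset.sum_ite_eq, Finset.mem_univ, if_true, smul_smul]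
  rw [← Finset.sum_smul, ip, Finset.mul_sum]
  congr 1; exact Finset.sum_congr rfl fun i _ => by ring

lemma vE_sq {E : Fin m → V →L[ℝ] V} (hE : CRel E) (x : Fin m → ℝ) (v : V) :
    vE E x (vE E x v) = (- ip x x) • v := by
  have h := vE_rel hE x x v
  have h2 : (2:ℝ) • vE E x (vE E x v) = (2:ℝ) • ((- ip x x) • v) := by
    rw [two_smul, h, smul_smul]; congr 1; ring
  exact smul_right_injective V (two_ne_zero' ℝ) h2

structure MG (E : Fin m → V →L[ℝ] V) (l : ℕ) (M : (Fin m → ℝ) → V) : Prop where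
  rel : CRel E
  smooth : ContDiff ℝ ⊤ M
  hom : ∀ (c : ℝ) x, M (c • x) = c^l • M x
  mono : ∀ x, ∑ i, E i (fderiv ℝ M x (Pi.single i 1)) = 0

variable {E : Fin m → V →L[ℝ] V} {l : ℕ} {M : (Fin m → ℝ) → V}

lemma MG.diff (h : MG E l M) : Differentiable ℝ M := h.smooth.differentiable (by simp)

lemma MG.contf (h : MG E l M) (v) : Continuous fun x => fderiv ℝ M x v :=
  (h.smooth.continuous_fderiv (by simp)).clm_apply continuous_const

lemma MG.homD (h : MG E l M) (c : ℝ) (x v : Fin m → ℝ) :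
    c • fderiv ℝ M (c • x) v = c^l • fderiv ℝ M x v := by
  have h1 : HasFDerivAt (fun x => M (c • x)) ((fderiv ℝ M (c • x)).comp (c • ContinuousLinearMap.id ℝ _)) x :=
    (h.diff (c • x)).hasFDerivAt.comp x ((hasFDerivAt_id x).const_smul c)
  have h2 : HasFDerivAt (fun x => M (c • x)) (c^l • fderiv ℝ M x) x := by
    simp only [h.hom c]
    exact (h.diff x).hasFDerivAt.const_smul (c^l)
  have := congrArg (fun L => L v) (h1.unique h2)
  simpa using this

lemma MG.dg (h : MG E l M) : DG M (fun i x => fderiv ℝ M x (Pi.single i 1)) where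
  diff := h.diff
  eq _ _ := rfl
  cont i := h.contf _
  eg := EG_hom h.diff.continuous l fun c hc x => by
    rw [h.hom, norm_smul, norm_pow, Real.norm_of_nonneg (by linarith)]
  eg' i := EG_hom (h.contf _) l fun c hc x => by
    have h1 := congrArg norm (h.homD c x (Pi.single i 1))
    rw [norm_smul, norm_smul, norm_pow, Real.norm_of_nonneg (by linarith)] at h1
    rw [← h1]
    exact le_mul_of_one_le_left (norm_nonneg _) hc

/-- directional derivative is monogenic -/
lemma MG.dir (h : MG E (l+1) M) (η : Fin m → ℝ) : MG E l (fun x => fderiv ℝ M x η) where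
  rel := h.rel
  smooth := (h.smooth.fderiv_right le_top).clm_apply contDiff_const
  hom := by
    intro c x
    have hd : Dense ({0}ᶜ : Set ℝ) := dense_compl_singleton 0
    have := Continuous.ext_on (f := fun c : ℝ => fderiv ℝ M (c • x) η)
      (g := fun c : ℝ => c^l • fderiv ℝ M x η) hd
      ((h.contf η).comp (by fun_prop)) (by fun_prop) (fun c hc => by
        have h1 := h.homD c x η
        rw [pow_succ', mul_smul] at h1
        exact smul_right_injective V (show c ≠ 0 from hc) h1)
    exact congrFun this c
  mono := by
    intro x
    have hs : ContDiff ℝ ⊤ (fderiv ℝ M) := h.smooth.fderiv_right le_top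
    have hd : Differentiable ℝ (fderiv ℝ M) := hs.differentiable (by simp)
    have hsym : IsSymmSndFDerivAt ℝ M x := h.smooth.contDiffAt.isSymmSndFDerivAt (by simp)
    have h1 : ∀ w v : Fin m → ℝ, fderiv ℝ (fun x => fderiv ℝ M x w) x v = fderiv ℝ (fderiv ℝ M) x v w := by
      intro w v
      have h2 : HasFDerivAt (fun x => fderiv ℝ M x w) _ x :=
        (hd x).hasFDerivAt.clm_apply (hasFDerivAt_const w x)
      rw [h2.fderiv]; simp
    simp only [h1]
    have h3 : HasFDerivAt (fun x => ∑ i, E i (fderiv ℝ M x (Pi.single i 1)))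
        (∑ i, (E i).comp (fderiv ℝ (fun x => fderiv ℝ M x (Pi.single i 1)) x)) x := by
      refine HasFDerivAt.fun_sum fun i _ => ?_
      refine (E i).hasFDerivAt.comp x (DifferentiableAt.hasFDerivAt ?_)
      exact (hd x).clm_apply (by fun_prop)
    simp only [h.mono] at h3
    have h4 := h3.unique (hasFDerivAt_const 0 x)
    have h5 := congrArg (fun L => L η) h4
    simp only [zero_apply] at h5
    rw [← h5]
    simp only [sum_apply, ContinuousLinearMap.comp_apply, h1]
    exact Finset.sum_congr rfl fun i _ => by rw [hsym.eq]

lemma dibp {f : (Fin m → ℝ) → V} {f'} (hf : DG f f') :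
    ∫ x, ga x • vE E x (f x) = ∫ x, ga x • ∑ i, E i (f' i x) := by
  simp only [vE_apply, Finset.smul_sum]
  rw [integral_finsetSum _ fun i _ => ((DG.coord i).smul (hf.clm (E i))).integrable,
    Finset.sum_congr rfl fun i _ => ibp (hf.clm (E i)) i,
    ← integral_finsetSum _ fun i _ => ((hf.clm (E i)).eg' i).integrable ((hf.clm (E i)).cont i).aestronglyMeasurable]

def Jm (η : Fin m → ℝ) (n : ℕ) (f : (Fin m → ℝ) → V) : V := ∫ x, ga x • ((ip x η)^n • f x)

lemma dg_pn (η : Fin m → ℝ) (n : ℕ) {f : (Fin m → ℝ) → V} {f'} (hf : DG f f') :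
    DG (fun x => (ip x η)^n • f x)
      (fun i x => (ip x η)^n • f' i x + (n * (ip x η)^(n-1) * η i) • f x) :=
  ((DG.inn η).pow n).smul hf

lemma vE_clm_int [CompleteSpace V] (η y : Fin m → ℝ) (n : ℕ) {f : (Fin m → ℝ) → V} {f'} (hf : DG f f') :
    vE E y (Jm η n f) = ∫ x, ga x • ((ip x η)^n • vE E y (f x)) := by
  rw [Jm, ← ContinuousLinearMap.integral_comp_comm _ (dg_pn η n hf).integrable]
  simp only [map_smul]

lemma MG.xdg (h : MG E l M) : DG (fun x => vE E x (M x))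
    (fun i x => E i (M x) + vE E x (fderiv ℝ M x (Pi.single i 1))) := by
  simp only [vE_apply]
  refine (DG.sum Finset.univ fun i _ => (DG.coord i).smul (h.dg.clm (E i))).congr fun i x => ?_
  simp [Finset.sum_add_distrib, add_comm]

lemma MG.xhom (h : MG E l M) (c : ℝ) (x) : vE E (c • x) (M (c • x)) = c^(l+1) • vE E x (M x) := by
  simp only [vE_apply, h.hom, Finset.smul_sum, map_smul, smul_smul]
  refine Finset.sum_congr rfl fun i _ => ?_
  congr 1; simp; ring

lemma MG.J_x [CompleteSpace V] (h : MG E l M) (η : Fin m → ℝ) (n : ℕ) :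
    Jm η n (fun x => vE E x (M x)) = (n:ℝ) • vE E η (Jm η (n-1) M) := by
  have h1 := dibp (E := E) (dg_pn η n h.dg)
  rw [vE_clm_int η η (n-1) h.dg, ← integral_smul]
  simp only [map_smul, map_add] at h1
  rw [Jm, h1]
  congr 1; ext x
  rw [smul_comm (n:ℝ)]
  congr 1
  rw [Finset.sum_add_distrib, ← Finset.smul_sum, h.mono, smul_zero, zero_add, vE_apply,
    smul_smul, Finset.smul_sum]
  simp only [smul_smul]

lemma ip_self_smul (c : ℝ) (x η : Fin m → ℝ) : ip (c • x) η = c * ip x η := by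
  simp only [ip, Finset.mul_sum]; exact Finset.sum_congr rfl fun i _ => by simp; ring

lemma hom_pn {f : (Fin m → ℝ) → V} (η : Fin m → ℝ) (n d : ℕ)
    (hh : ∀ c : ℝ, ∀ x, f (c • x) = c^d • f x) (c : ℝ) (x : Fin m → ℝ) :
    (ip (c • x) η)^n • f (c • x) = c^(n+d) • ((ip x η)^n • f x) := by
  rw [ip_self_smul, hh, smul_smul, smul_smul]; congr 1; ring

lemma MG.J_rec [CompleteSpace V] (h : MG E l M) (η : Fin m → ℝ) (hη : ip η η = 1) (n : ℕ) :
    ((n:ℝ) - l) • Jm η n M = ((n:ℝ) * (n-1)) • Jm η (n-2) M := by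
  have h1 := dibp (E := E) (dg_pn η n h.xdg)
  have h2 := radial (dg_pn η n h.dg) (n+l) (hom_pn η n l h.hom)
  have h3 : ∫ x, ga x • vE E x ((ip x η)^n • vE E x (M x)) =
      - ∫ x, ga x • (ip x x • ((ip x η)^n • M x)) := by
    rw [← integral_neg]; congr 1; ext x
    rw [map_smul, vE_sq h.rel, smul_comm (ip x x), neg_smul, smul_neg, smul_neg]
  have h4 : ∀ x, ∑ i, E i ((ip x η)^n • (E i (M x) + vE E x (fderiv ℝ M x (Pi.single i 1)))
      + (n * (ip x η)^(n-1) * η i) • vE E x (M x)) =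
      (-((m:ℝ)+2*l)) • ((ip x η)^n • M x) + (n:ℝ) • ((ip x η)^(n-1) • vE E η (vE E x (M x))) := by
    intro x
    have a1 : ∀ i, E i (E i (M x)) = - M x := fun i => by
      have := h.rel i i (M x)
      rw [if_pos rfl, ← two_smul ℝ] at this
      have h5 : (2:ℝ) • E i (E i (M x)) = (2:ℝ) • (- M x) := by rw [this]; simp
      exact smul_right_injective V (two_ne_zero' ℝ) h5
    have a2 : ∑ i, E i (vE E x (fderiv ℝ M x (Pi.single i 1))) = (-2 * l : ℝ) • M x := by
      have b1 : ∀ i v, E i (vE E x v) = (-2 * x i) • v - vE E x (E i v) := by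
        intro i v
        have := vE_rel h.rel (Pi.single i 1) x v
        have hs : ∀ w, vE E (Pi.single i 1) w = E i w := fun w => by
          simp [vE_apply, Pi.single_apply]
        have hi : ip (Pi.single i 1) x = x i := by simp [ip, Pi.single_apply]
        rw [hs, hs, hi] at this
        rw [← this]; simp
      simp only [b1]
      rw [Finset.sum_sub_distrib, ← map_sum, h.mono, map_zero, sub_zero]
      have := euler_id h.dg l h.hom x
      simp only [mul_smul, ← Finset.smul_sum, this]
    simp only [map_add, map_smul, smul_add, Finset.sum_add_distrib, ← Finset.smul_sum, a1, a2]
    rw [vE_apply E η]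
    simp only [mul_smul, ← Finset.smul_sum]
    rw [Finset.sum_const, Finset.card_univ, Fintype.card_fin]
    rw [← Nat.cast_smul_eq_nsmul ℝ]
    module
  rw [h3, h2] at h1
  simp only [h4] at h1
  simp only [smul_add, smul_comm (ga _) (n:ℝ), smul_comm (ga _) (-((m:ℝ)+2*l))] at h1
  have i1 : Integrable fun x => ga x • ((ip x η)^n • M x) := (dg_pn η n h.dg).integrable
  have i2 : Integrable fun x => ga x • ((ip x η)^(n-1) • vE E η (vE E x (M x))) :=
    (dg_pn η (n-1) (h.xdg.clm (vE E η))).integrable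
  rw [integral_add (ismul i1 _) (ismul i2 _), integral_smul, integral_smul,
    ← vE_clm_int η η (n-1) h.xdg, h.J_x, map_smul, vE_sq h.rel, hη] at h1
  change -(_ • Jm η n M) = _ • Jm η n M + _ at h1
  rw [Nat.sub_sub] at h1
  have e : (n:ℝ) • ((n-1:ℕ):ℝ) • (-1:ℝ) • Jm η (n-2) M = (-((n:ℝ)*(n-1))) • Jm η (n-2) M := by
    rcases n with _ | n
    · simp
    · rw [smul_smul, smul_smul]; congr 1; push_cast; simp
  rw [show 1 + 1 = 2 from rfl, e] at h1
  push_cast at h1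
  have h6 := sub_eq_zero.2 h1
  rw [← sub_eq_zero, ← neg_eq_zero, ← h6]
  module

lemma MG.J_low [CompleteSpace V] (h : MG E l M) (η : Fin m → ℝ) (hη : ip η η = 1) (n : ℕ) (hn : n < l) :
    Jm η n M = 0 := by
  induction n using Nat.strong_induction_on with
  | _ n ih =>
    have h1 := h.J_rec η hη n
    have h2 : ((n:ℝ) * (n-1)) • Jm η (n-2) M = 0 := by
      rcases n with _ | _ | n
      · simp
      · simp
      · rw [ih _ (by omega) (by omega), smul_zero]
    rw [h2] at h1
    have h3 : (n:ℝ) - l ≠ 0 := by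
      have : (n:ℝ) < l := by exact_mod_cast hn
      linarith
    exact (smul_eq_zero.1 h1).resolve_left h3

lemma MG.J_diag [CompleteSpace V] (η : Fin m → ℝ) (hη : ip η η = 1) :
    ∀ (l : ℕ) (M : (Fin m → ℝ) → V), MG E l M →
    Jm η l M = ((2*Real.pi)^((m:ℝ)/2) * (l.factorial : ℝ)) • M η := by
  intro l
  induction l with
  | zero =>
    intro M h
    have hc : ∀ x, M x = M η := fun x => by
      have a := h.hom 0 x
      have b := h.hom 0 η
      simp only [zero_smul, pow_zero, one_smul] at a b
      rw [← a, ← b]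
    simp only [Jm, pow_zero, one_smul, hc]
    rw [integral_smul_const, integral_ga]; simp
  | succ l ih =>
    intro M h
    have h1 : ∀ x, ga x • ((ip x η)^(l+1) • M x) = ∑ i, η i • (ga x • (x i • ((ip x η)^l • M x))) := by
      intro x
      have : (ip x η)^(l+1) = ∑ i, η i * x i * (ip x η)^l := by
        rw [← Finset.sum_mul, pow_succ', ip]; congr 1
        exact Finset.sum_congr rfl fun i _ => mul_comm _ _
      rw [this, Finset.sum_smul, Finset.smul_sum]
      refine Finset.sum_congr rfl fun i _ => ?_
      rw [smul_comm (η i), smul_smul (x i), smul_smul (η i), mul_assoc]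
    have hd := dg_pn η l h.dg
    rw [Jm]
    simp only [h1]
    rw [integral_finsetSum _ fun i _ => (ismul ((DG.coord i).smul hd).integrable (η i))]
    simp only [integral_smul]
    rw [Finset.sum_congr rfl fun i _ => congrArg (fun z => η i • z) (ibp hd i)]
    simp only [← integral_smul]
    rw [← integral_finsetSum _ fun i _ => (ismul ((hd.eg' i).integrable (hd.cont i).aestronglyMeasurable) (η i))]
    have h2 : ∀ x, ∑ i, η i • (ga x • ((ip x η)^l • fderiv ℝ M x (Pi.single i 1)
        + (l * (ip x η)^(l-1) * η i) • M x)) =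
        ga x • ((ip x η)^l • fderiv ℝ M x η) + (l:ℝ) • (ga x • ((ip x η)^(l-1) • M x)) := by
      intro x
      have hx : fderiv ℝ M x η = ∑ i, η i • fderiv ℝ M x (Pi.single i 1) := by
        conv_lhs => rw [show η = ∑ i, η i • (Pi.single i (1:ℝ) : Fin m → ℝ) by
          ext j; simp [Finset.sum_apply, Pi.single_apply]]
        rw [map_sum]; simp only [map_smul]
      have he : M x = ∑ i, (η i * η i) • M x := by
        rw [← Finset.sum_smul]; rw [ip] at hη; rw [hη, one_smul]
      rw [hx]
      conv_rhs => rw [he]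
      simp only [Finset.smul_sum, smul_smul]
      rw [← Finset.sum_add_distrib]
      refine Finset.sum_congr rfl fun i _ => ?_
      rw [smul_add, smul_smul, smul_smul]
      congr 2 <;> ring
    simp only [h2]
    have hd' := h.dir η
    rw [integral_add (dg_pn η l hd'.dg).integrable (ismul (dg_pn η (l-1) h.dg).integrable (l:ℝ)),
      integral_smul]
    have h3 : Jm η (l-1) M = 0 := h.J_low η hη _ (by omega)
    rw [Jm] at h3
    rw [h3, smul_zero, add_zero]
    have h4 := ih _ hd'
    rw [Jm] at h4
    rw [h4]
    have h5 := euler_id h.dg (l+1) h.hom η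
    have hx : fderiv ℝ M η η = ∑ i, η i • fderiv ℝ M η (Pi.single i 1) := by
      conv_lhs => rw [show fderiv ℝ M η η = fderiv ℝ M η (∑ i, η i • (Pi.single i (1:ℝ) : Fin m → ℝ)) by
        congr 1; ext j; simp [Finset.sum_apply, Pi.single_apply]]
      rw [map_sum]; simp only [map_smul]
    rw [hx, h5, smul_smul, Nat.factorial_succ]
    congr 1; push_cast; ring

def bJ (n l : ℕ) : ℝ :=
  if l ≤ n ∧ Even (n - l) then (n.factorial : ℝ) / (2^((n-l)/2) * ((n-l)/2).factorial) else 0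

lemma bJ_diag (l q : ℕ) : bJ (l+2*q) l = ((l+2*q).factorial : ℝ) / (2^q * q.factorial) := by
  have h1 : (l + 2*q - l) = 2*q := by omega
  rw [bJ, if_pos ⟨by omega, by simp [h1]⟩, h1, Nat.mul_div_cancel_left _ (by norm_num)]

lemma MG.J_val [CompleteSpace V] (h : MG E l M) (η : Fin m → ℝ) (hη : ip η η = 1) (n : ℕ) :
    Jm η n M = ((2*Real.pi)^((m:ℝ)/2) * bJ n l) • M η := by
  induction n using Nat.strong_induction_on with
  | _ n ih =>
    rcases lt_trichotomy n l with hn | rfl | hn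
    · rw [h.J_low η hη n hn, bJ, if_neg (by omega)]; simp
    · rw [MG.J_diag η hη n M h]
      have := bJ_diag n 0
      simp only [mul_zero, add_zero] at this
      rw [this]; simp
    · have h1 := h.J_rec η hη n
      have h3 : (n:ℝ) - l ≠ 0 := by
        have : (l:ℝ) < n := by exact_mod_cast hn
        linarith
      apply smul_right_injective V h3
      dsimp only
      rw [h1]
      by_cases hb : l + 2 ≤ n
      · rw [ih (n-2) (by omega), smul_smul, smul_smul]
        congr 1
        by_cases he : Even (n - l)
        · obtain ⟨q, hq⟩ := he
          obtain ⟨q, rfl⟩ : ∃ p, q = p + 1 := ⟨q-1, by omega⟩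
          obtain rfl : n = l + 2*(q+1) := by omega
          rw [show l + 2*(q+1) - 2 = l + 2*q by omega, bJ_diag, bJ_diag,
            show l + 2*(q+1) = (l+2*q+1)+1 by ring, Nat.factorial_succ (l+2*q+1),
            Nat.factorial_succ (l+2*q), Nat.factorial_succ q]
          push_cast
          field_simp
          ring
        · rw [bJ, if_neg, bJ, if_neg]
          · simp
          · tauto
          · rintro ⟨_, q, hq⟩; exact he ⟨q+1, by omega⟩
      · obtain rfl : n = l + 1 := by omega
        have hz : ((l+1:ℕ):ℝ) * ((l+1:ℕ)-1) * 1 = (l+1:ℕ) * l := by push_cast; ring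
        have : (((l+1:ℕ):ℝ) * ((l+1:ℕ)-1)) • Jm η (l+1-2) M = 0 := by
          rcases l with _ | l
          · simp
          · rw [h.J_low η hη _ (by omega), smul_zero]
        rw [this, bJ, if_neg]
        · simp
        · rintro ⟨_, q, hq⟩; omega

lemma MG.J_xval [CompleteSpace V] (h : MG E l M) (η : Fin m → ℝ) (hη : ip η η = 1) (n : ℕ) :
    Jm η n (fun x => vE E x (M x)) = ((2*Real.pi)^((m:ℝ)/2) * bJ n (l+1)) • vE E η (M η) := by
  rw [h.J_x, h.J_val η hη, map_smul, smul_smul]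
  congr 1
  rcases n with _ | n
  · simp [bJ]
  · by_cases he : l ≤ n ∧ Even (n - l)
    · obtain ⟨h1, q, hq⟩ := he
      obtain rfl : n = l + 2*q := by omega
      rw [show l + 2*q + 1 = (l+1) + 2*q by ring, bJ_diag, show (l+1) + 2*q - 1 = l + 2*q by omega,
        bJ_diag, show (l+1) + 2*q = l+2*q+1 by ring, Nat.factorial_succ]
      push_cast; ring
    · rw [Nat.add_sub_cancel, bJ, if_neg he, bJ, if_neg]
      · simp
      · rwa [Nat.add_sub_add_right, Nat.add_le_add_iff_right]

/-- homogenized polynomial -/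
def fh (p : Polynomial ℝ) (k : ℕ) (η x : Fin m → ℝ) : ℝ :=
  p.sum fun n c => c * ((ip x x)^((k-n)/2) * (ip x η)^n)

lemma dg_fh (p : Polynomial ℝ) (k : ℕ) (η : Fin m → ℝ) :
    ∃ g', DG (fun x => fh p k η x) g' := by
  refine ⟨_, DG.sum _ fun n _ => (DG.const (p.coeff n)).smul ((DG.ipself.pow _).smul ((DG.inn η).pow n))⟩

lemma FH {f : (Fin m → ℝ) → V} {f'} (hf : DG f f') (hm : 2 ≤ m)
    (hh : ∀ c : ℝ, ∀ x, f (c • x) = c^l • f x) (η : Fin m → ℝ) (v : V)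
    (hJ : ∀ n, Jm η n f = ((2*Real.pi)^((m:ℝ)/2) * bJ n l) • v)
    (p : Polynomial ℝ) (k i : ℕ) (hp : ∀ n, p.coeff n ≠ 0 → n ≤ k ∧ Even (k - n))
    (lam : ℝ) (hlam : lam = ((m:ℝ)-2)/2) :
    ∫ x, ga x • ((ip x x)^i • (fh p k η x • f x)) =
      ((2*Real.pi)^((m:ℝ)/2) * ((2:ℝ)^(((k:ℝ)+l)/2 + i) * Real.Gamma (((k:ℝ)+l)/2 + lam + 1 + i) * Lam lam l p)) • v := by
  have h1 : ∀ x, ga x • ((ip x x)^i • (fh p k η x • f x)) =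
      ∑ n ∈ p.support, p.coeff n • (ga x • ((ip x x)^(i + (k-n)/2) • ((ip x η)^n • f x))) := by
    intro x
    rw [fh, Polynomial.sum, Finset.sum_smul, Finset.smul_sum, Finset.smul_sum]
    refine Finset.sum_congr rfl fun n _ => ?_
    simp only [smul_smul]; congr 1; ring
  simp only [h1]
  rw [integral_finsetSum _ fun n _ => ismul ((DG.ipself.pow _).smul (dg_pn η n hf)).integrable (p.coeff n)]
  simp only [integral_smul]
  have h2 : ∀ n, ∫ x, ga x • ((ip x x)^(i + (k-n)/2) • ((ip x η)^n • f x)) = _ := fun n =>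
    radial_pow (dg_pn η n hf) (n+l) hm (hom_pn η n l hh) (i + (k-n)/2)
  have h3 : ∀ n, ∫ x, ga x • ((ip x η)^n • f x) = _ := hJ
  simp only [h2, h3]
  simp only [smul_smul]
  rw [← Finset.sum_smul, Lam_apply, Polynomial.sum, Finset.mul_sum, Finset.mul_sum]
  congr 1
  refine Finset.sum_congr rfl fun n hn => ?_
  obtain ⟨ha, g, hg⟩ := hp n (Polynomial.mem_support_iff.1 hn)
  obtain rfl : k = n + 2*g := by omega
  rw [show n + 2*g - n = 2*g by omega, Nat.mul_div_cancel_left _ (by norm_num)]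
  by_cases he : l ≤ n ∧ Even (n - l)
  · obtain ⟨h1, q, hq⟩ := he
    obtain rfl : n = l + 2*q := by omega
    rw [bJ_diag, am_diag]
    have e1 : ((m:ℝ) + (l+2*q+l:ℕ))/2 + (i+g:ℕ) = ((l+2*q+2*g:ℕ)+(l:ℝ))/2 + lam + 1 + i := by
      rw [hlam]; push_cast; ring
    have e2 : ((m:ℝ) + (l+2*q+l:ℕ))/2 = l+q+lam+1 := by
      rw [hlam]; push_cast; ring
    have e3 : ((l+2*q+2*g:ℕ)+(l:ℝ))/2 + i = (l+q+g+i:ℕ) := by push_cast; ring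
    rw [e1, e2, e3, Real.rpow_natCast]
    have e4 : (2:ℝ)^(l+q+g+i) / 2^(l+2*q) = 2^(i+g) / 2^q := by
      rw [div_eq_div_iff (by positivity) (by positivity)]; ring
    have hG : Real.Gamma (l+q+lam+1) ≠ 0 := (Real.Gamma_pos_of_pos (by
      have : (2:ℝ) ≤ m := by exact_mod_cast hm
      have : 0 ≤ lam := by rw [hlam]; linarith
      positivity)).ne'
    generalize Real.Gamma (((l+2*q+2*g:ℕ)+(l:ℝ))/2 + lam + 1 + i) = G1
    generalize Real.Gamma (l+q+lam+1) = G2 at *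
    generalize (2*Real.pi)^((m:ℝ)/2) = P
    have hq' : (q.factorial:ℝ) ≠ 0 := by positivity
    calc _ = P * p.coeff (l+2*q) * G1 / G2 * (l+2*q).factorial / q.factorial * (2^(i+g) / 2^q) := by
          field_simp
      _ = _ := by rw [← e4]; field_simp
  · rw [am_zero lam he, bJ, if_neg he]; simp

end H
end Part5

section Part6
set_option linter.unusedSectionVars false
section K

lemma Gam_ge (lam : ℝ) (hl : 0 ≤ lam) (j : ℕ) :
    Real.Gamma (lam+1) * (j.factorial : ℝ) ≤ Real.Gamma ((j:ℝ) + lam + 1) := by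
  induction j with
  | zero => simp
  | succ j ih =>
    have e : ((j+1:ℕ):ℝ) + lam + 1 = ((j:ℝ)+lam+1) + 1 := by push_cast; ring
    rw [e, Real.Gamma_add_one (show (j:ℝ)+lam+1 ≠ 0 by positivity), Nat.factorial_succ]
    have h0 : 0 < Real.Gamma (lam+1) := Real.Gamma_pos_of_pos (by positivity)
    push_cast
    calc _ = ((j:ℝ)+1) * (Real.Gamma (lam+1) * j.factorial) := by ring
      _ ≤ ((j:ℝ)+lam+1) * Real.Gamma ((j:ℝ) + lam + 1) := by
        gcongr
        linarith

lemma fact_bd (s : ℕ) : ((2*s).factorial : ℝ) ≤ 4^s * (s.factorial * s.factorial : ℝ) := by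
  induction s with
  | zero => simp
  | succ s ih =>
    rw [show 2*(s+1) = 2*s+1+1 by ring, Nat.factorial_succ, Nat.factorial_succ, Nat.factorial_succ s]
    push_cast
    calc _ = ((2*s+1+1)*(2*s+1) : ℝ) * (2*s).factorial := by ring
      _ ≤ ((2*s+1+1)*(2*s+1+1) : ℝ) * (4^s * (s.factorial * s.factorial : ℝ)) := by
        gcongr; linarith
      _ = _ := by ring

/-- terms of the Bessel series -/
def bt (lam : ℝ) (k s : ℕ) (z : ℝ) : ℝ :=
  ((-1 : ℝ)^s * (z/2) ^ (2*s)) / (s.factorial * Real.Gamma ((s : ℝ) + ((k:ℝ)+lam) + 1) * (2:ℝ)^((k:ℝ)+lam))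

lemma bt_bd (lam : ℝ) (hl : 0 ≤ lam) (k s : ℕ) (z : ℝ) :
    |bt lam k s z| ≤ (Real.Gamma (lam+1))⁻¹ * ((1 / (k.factorial:ℝ)) * (z^(2*s) / ((2*s).factorial : ℝ))) := by
  have h0 : 0 < Real.Gamma (lam+1) := Real.Gamma_pos_of_pos (by positivity)
  have h1 := Gam_ge lam hl (s+k)
  have h2 : ((s.factorial:ℝ) * k.factorial) ≤ (s+k).factorial := by
    exact_mod_cast Nat.le_of_dvd (Nat.factorial_pos _) (Nat.factorial_mul_factorial_dvd_factorial_add s k)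
  have e : (((s+k:ℕ):ℝ) + lam + 1) = (s : ℝ) + ((k:ℝ)+lam) + 1 := by push_cast; ring
  rw [e] at h1
  have h3 : (1:ℝ) ≤ 2^((k:ℝ)+lam) := Real.one_le_rpow (by norm_num) (by positivity)
  have hz : (z/2)^(2*s) = z^(2*s) / 4^s := by
    rw [div_pow, pow_mul 2]; norm_num
  have hz0 : 0 ≤ z^(2*s) := by rw [pow_mul]; positivity
  have hG : 0 < Real.Gamma ((s : ℝ) + ((k:ℝ)+lam) + 1) := Real.Gamma_pos_of_pos (by positivity)
  rw [bt, abs_div, abs_mul, abs_pow, abs_neg, abs_one, one_pow, one_mul, hz,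
    abs_of_nonneg (by positivity), abs_of_pos (by positivity)]
  have hd : Real.Gamma (lam+1) * k.factorial * (2*s).factorial ≤
      4^s * (s.factorial * Real.Gamma ((s : ℝ) + ((k:ℝ)+lam) + 1) * (2:ℝ)^((k:ℝ)+lam)) := by
    calc _ ≤ Real.Gamma (lam+1) * k.factorial * (4^s * (s.factorial * s.factorial : ℝ)) := by
          gcongr; exact fact_bd s
      _ = 4^s * (s.factorial * (Real.Gamma (lam+1) * (s.factorial * k.factorial)) * 1) := by ring
      _ ≤ 4^s * (s.factorial * (Real.Gamma (lam+1) * (s+k).factorial) * (2:ℝ)^((k:ℝ)+lam)) := by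
          gcongr
      _ ≤ _ := by gcongr
  calc _ = z^(2*s) / (4^s * (s.factorial * Real.Gamma ((s : ℝ) + ((k:ℝ)+lam) + 1) * (2:ℝ)^((k:ℝ)+lam))) := by
        rw [div_div]
    _ ≤ z^(2*s) / (Real.Gamma (lam+1) * k.factorial * (2*s).factorial) := by gcongr
    _ = _ := by field_simp

lemma hs_bd (D z : ℝ) : HasSum (fun p : ℕ × ℕ => (D^p.1 / (p.1.factorial:ℝ)) * (z^(2*p.2) / ((2*p.2).factorial : ℝ)))
    (Real.exp D * Real.cosh z) := by
  have h1 : HasSum (fun k : ℕ => D^k / (k.factorial:ℝ)) (Real.exp D) := by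
    rw [Real.exp_eq_exp_ℝ]; exact NormedSpace.expSeries_div_hasSum_exp D
  have h2 := Real.hasSum_cosh z
  have h3 : Summable (fun p : ℕ × ℕ => (D^p.1 / (p.1.factorial:ℝ)) * (z^(2*p.2) / ((2*p.2).factorial : ℝ))) :=
    summable_mul_of_summable_norm (f := fun k : ℕ => D^k / (k.factorial:ℝ))
      (g := fun s : ℕ => z^(2*s) / ((2*s).factorial : ℝ)) h1.summable.norm h2.summable.norm
  exact HasSum.mul (f := fun k : ℕ => D^k / (k.factorial:ℝ))
      (g := fun s : ℕ => z^(2*s) / ((2*s).factorial : ℝ)) h1 h2 h3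

lemma hs_bessel (lam : ℝ) (hl : 0 ≤ lam) (z : ℝ) (a : ℕ → ℂ) (A D : ℝ)
    (ha : ∀ k, ‖a k‖ ≤ A * D^k) :
    HasSum (fun p : ℕ × ℕ => a p.1 * (bt lam p.1 p.2 z : ℂ)) (∑' k, a k * (besselJt ((k:ℝ)+lam) z : ℂ)) := by
  have hS : Summable (fun p : ℕ × ℕ => a p.1 * (bt lam p.1 p.2 z : ℂ)) := by
    refine Summable.of_norm_bounded (((hs_bd D z).summable).mul_left (A * (Real.Gamma (lam+1))⁻¹)) fun p => ?_
    rw [norm_mul, Complex.norm_real, Real.norm_eq_abs]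
    calc _ ≤ (A * D^p.1) * ((Real.Gamma (lam+1))⁻¹ * ((1 / (p.1.factorial:ℝ)) * (z^(2*p.2) / ((2*p.2).factorial : ℝ)))) :=
          mul_le_mul (ha _) (bt_bd lam hl _ _ _) (abs_nonneg _) ((norm_nonneg _).trans (ha _))
      _ = _ := by ring
  have h2 := hS.hasSum
  rw [hS.tsum_prod] at h2
  have h3 : ∀ k, ∑' s, a k * (bt lam k s z : ℂ) = a k * (besselJt ((k:ℝ)+lam) z : ℂ) := fun k => by
    rw [tsum_mul_left, besselJt, Complex.ofReal_tsum]; rfl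
  simp only [h3] at h2
  exact h2

lemma geg_bd (mu : ℝ) (hmu : 0 ≤ mu) (w : ℝ) (hw : |w| ≤ 1) (k : ℕ) :
    |geg mu k w| ≤ (3*(1+mu))^k := by
  induction k using Nat.strong_induction_on with
  | _ k ih =>
    rcases k with _ | _ | k
    · simp [geg]
    · rw [geg, abs_mul, abs_mul, abs_of_nonneg hmu, abs_two]
      have := abs_nonneg w
      simp only [zero_add, pow_one]
      nlinarith
    · have h1 := ih (k+1) (by omega)
      have h0 := ih k (by omega)
      rw [geg]
      set D := 3*(1+mu) with hD
      have hD1 : 1 ≤ D := by rw [hD]; linarith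
      rw [abs_div, abs_of_pos (show (0:ℝ) < (k:ℝ)+2 by positivity), div_le_iff₀ (by positivity)]
      have hk : (0:ℝ) ≤ k := by positivity
      calc _ ≤ |2 * ((k : ℝ) + 1 + mu) * w * geg mu (k+1) w| + |((k : ℝ) + 2 * mu) * geg mu k w| :=
            abs_sub _ _
        _ = 2 * ((k : ℝ) + 1 + mu) * |w| * |geg mu (k+1) w| + ((k : ℝ) + 2 * mu) * |geg mu k w| := by
            rw [abs_mul, abs_mul (2 * ((k : ℝ) + 1 + mu)), abs_mul ((k : ℝ) + 2 * mu),
              abs_of_nonneg (show 0 ≤ 2 * ((k : ℝ) + 1 + mu) by positivity),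
              abs_of_nonneg (show 0 ≤ ((k : ℝ) + 2 * mu) by positivity)]
        _ ≤ 2 * ((k : ℝ) + 1 + mu) * 1 * D^(k+1) + ((k : ℝ) + 2 * mu) * D^k := by gcongr
        _ ≤ 2 * ((k : ℝ) + 1 + mu) * 1 * D^(k+1) + ((k : ℝ) + 2 * mu) * D^(k+1) := by
            gcongr <;> omega
        _ = (2 * ((k : ℝ) + 1 + mu) + ((k : ℝ) + 2 * mu)) * D^(k+1) := by ring
        _ ≤ (D * (k+2)) * D^(k+1) := by
            gcongr; rw [hD]; nlinarith
        _ = _ := by ring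

variable {m : ℕ}

lemma ip_nonneg (x : Fin m → ℝ) : 0 ≤ ip x x := Finset.sum_nonneg fun _ _ => mul_self_nonneg _

lemma nrm_sq (x : Fin m → ℝ) : nrm x ^ 2 = ip x x := Real.sq_sqrt (ip_nonneg x)

lemma nrm_nonneg (x : Fin m → ℝ) : 0 ≤ nrm x := Real.sqrt_nonneg _

lemma ip_cs (x y : Fin m → ℝ) : |ip x y| ≤ nrm x * nrm y := by
  apply abs_le_of_sq_le_sq _ (mul_nonneg (nrm_nonneg _) (nrm_nonneg _))
  rw [mul_pow, nrm_sq, nrm_sq]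
  have := Finset.sum_mul_sq_le_sq_mul_sq Finset.univ x y
  simpa only [ip, sq] using this

lemma nrm_le_S1 (x : Fin m → ℝ) : nrm x ≤ S1 x := by
  rw [nrm]
  apply Real.sqrt_le_iff.2 ⟨S1_nonneg x, ?_⟩
  have h : ip x x = ∑ i, |x i| * |x i| := Finset.sum_congr rfl fun i _ => (abs_mul_abs_self _).symm
  rw [h, sq, S1, Finset.sum_mul]
  refine Finset.sum_le_sum fun i _ => ?_
  exact mul_le_mul_of_nonneg_left (le_S1 x i) (abs_nonneg _)

lemma w_le (x y : Fin m → ℝ) : |ip x y / (nrm x * nrm y)| ≤ 1 := by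
  have h := mul_nonneg (nrm_nonneg x) (nrm_nonneg y)
  rw [abs_div, abs_of_nonneg h]
  exact div_le_one_of_le₀ (ip_cs x y) h

lemma zw (x y : Fin m → ℝ) : (nrm x * nrm y) * (ip x y / (nrm x * nrm y)) = ip x y := by
  by_cases h : nrm x * nrm y = 0
  · have := ip_cs x y
    rw [h] at this
    rw [h, zero_mul, abs_eq_zero.1 (le_antisymm this (abs_nonneg _))]
  · exact mul_div_cancel₀ _ h

lemma ip_smul_r (c : ℝ) (x η : Fin m → ℝ) : ip x (c • η) = c * ip x η := by
  simp only [ip, Finset.mul_sum]; exact Finset.sum_congr rfl fun i _ => by simp; ring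

lemma fh_eval (p : Polynomial ℝ) (k : ℕ) (hp : ∀ n, p.coeff n ≠ 0 → n ≤ k ∧ Even (k - n))
    (x y η : Fin m → ℝ) (hy : y = nrm y • η) :
    (nrm x * nrm y)^k * p.eval (ip x y / (nrm x * nrm y)) = (nrm y)^k * fh p k η x := by
  rw [fh, Polynomial.eval_eq_sum, Polynomial.sum, Polynomial.sum, Finset.mul_sum, Finset.mul_sum]
  refine Finset.sum_congr rfl fun n hn => ?_
  obtain ⟨ha, g, hg⟩ := hp n (Polynomial.mem_support_iff.1 hn)
  obtain rfl : k = n + 2*g := by omega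
  rw [show n + 2*g - n = 2*g by omega, Nat.mul_div_cancel_left _ (by norm_num)]
  have h1 : ip x y = nrm y * ip x η := by
    conv_lhs => rw [hy]
    rw [ip_smul_r]
  calc _ = p.coeff n * (((nrm x * nrm y) * (ip x y / (nrm x * nrm y)))^n * ((nrm x^2)^g * (nrm y)^(2*g))) := by
        rw [mul_pow (nrm x * nrm y) (ip x y / (nrm x * nrm y))]; ring
    _ = _ := by rw [zw, nrm_sq, h1]; ring

end K
end Part6

section Part7
set_option linter.unusedSectionVars false
section T
variable {m : ℕ} {V : Type*} [NormedAddCommGroup V] [NormedSpace ℂ V] [NormedSpace ℝ V]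
  [IsScalarTower ℝ ℂ V] [CompleteSpace V]

lemma rs (r : ℝ) (v : V) : r • v = (r:ℂ) • v := by
  rw [← one_smul ℂ v, ← smul_assoc, ← smul_assoc]; simp

lemma gQ_coeff (lam : ℝ) (k : ℕ) : ∀ n, (gQ lam k).coeff n ≠ 0 → n ≤ k - 1 ∧ Even (k - 1 - n) := by
  intro n h
  unfold gQ at h
  split_ifs at h
  · exact gp_coeff _ _ n h
  · simp at h

lemma XgQ_coeff (lam : ℝ) (k : ℕ) : ∀ n, (Polynomial.X * gQ lam k).coeff n ≠ 0 → n ≤ k ∧ Even (k - n) := by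
  intro n h
  rcases n with _ | n
  · simp at h
  · rw [Polynomial.coeff_X_mul] at h
    rcases k with _ | k
    · simp [gQ] at h
    · have := gQ_coeff lam (k+1) n h
      simp only [Nat.add_sub_cancel] at this
      rw [Nat.add_sub_add_right]; exact ⟨by omega, this.2⟩

lemma fh_add (p q : Polynomial ℝ) (k : ℕ) (η x : Fin m → ℝ) :
    fh (p + q) k η x = fh p k η x + fh q k η x := by
  unfold fh
  exact Polynomial.sum_add_index _ _ _ (by simp) (by intros; ring)

lemma fh_X (p : Polynomial ℝ) (k : ℕ) (η x : Fin m → ℝ) :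
    fh (Polynomial.X * p) (k+1) η x = ip x η * fh p k η x := by
  induction p using Polynomial.induction_on' with
  | add p q hp hq => rw [mul_add, fh_add, fh_add, hp, hq]; ring
  | monomial n a =>
    rw [Polynomial.X_mul_monomial, fh, fh, Polynomial.sum_monomial_index _ _ (by simp),
      Polynomial.sum_monomial_index _ _ (by simp), Nat.add_sub_add_right]
    ring

lemma fh_XgQ (lam : ℝ) (k : ℕ) (η x : Fin m → ℝ) :
    fh (Polynomial.X * gQ lam k) k η x = ip x η * fh (gQ lam k) (k-1) η x := by
  rcases k with _ | k
  · simp [gQ, fh]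
  · exact fh_X _ _ _ _

/-- coefficients of the kernel, applied to `f` -/
def Br (E : Fin m → V →L[ℝ] V) (u : ℂ) (lam : ℝ) (η : Fin m → ℝ) (k : ℕ) (f : (Fin m → ℝ) → V)
    (x : Fin m → ℝ) : V :=
  ((u + (-1)^k) * (fh (gp lam k) k η x : ℂ) - (u - (-1)^k) * (fh (gT lam k) k η x : ℂ)) • f x
  - (2 * (u + (-1)^k) * (fh (gQ lam k) (k-1) η x : ℂ)) • (- vE E η (vE E x (f x)) - ip x η • f x)

def cc (m : ℕ) (lam : ℝ) (k l i : ℕ) : ℝ :=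
  (2*Real.pi)^((m:ℝ)/2) * ((2:ℝ)^(((k:ℝ)+l)/2 + i) * Real.Gamma (((k:ℝ)+l)/2 + lam + 1 + i))

lemma csmul {f : (Fin m → ℝ) → V} (h : Integrable f) (c : ℂ) : Integrable (fun x => c • f x) :=
  h.smul c

lemma iadd {f g : (Fin m → ℝ) → V} (h : Integrable f) (h2 : Integrable g) :
    Integrable (fun x => f x + g x) := h.add h2

lemma Br_hI (η : Fin m → ℝ) (k i : ℕ) {f : (Fin m → ℝ) → V} {f'} (hf : DG f f') (p : Polynomial ℝ) :
    Integrable fun x => ga x • ((ip x x)^i • (fh p k η x • f x)) := by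
  obtain ⟨g, hg⟩ := dg_fh p k η
  exact ((DG.ipself.pow i).smul (hg.smul hf)).integrable

lemma Br_hI2 {E : Fin m → V →L[ℝ] V} (lam : ℝ) (η : Fin m → ℝ) (k i : ℕ) {f : (Fin m → ℝ) → V}
    {g'} (hg : DG (fun x => vE E η (vE E x (f x))) g') :
    Integrable fun x => ga x • ((ip x x)^i • (fh (gQ lam k) (k-1) η x • vE E η (vE E x (f x)))) := by
  obtain ⟨g, hg1⟩ := dg_fh (gQ lam k) (k-1) η
  exact ((DG.ipself.pow i).smul (hg1.smul hg)).integrable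

lemma Br_exp (E : Fin m → V →L[ℝ] V) (u : ℂ) (lam : ℝ) (η : Fin m → ℝ) (k i : ℕ)
    (f : (Fin m → ℝ) → V) (x : Fin m → ℝ) : ga x • ((ip x x)^i • Br E u lam η k f x) =
      (((u + (-1)^k) • (ga x • ((ip x x)^i • (fh (gp lam k) k η x • f x)))
      + (-(u - (-1)^k)) • (ga x • ((ip x x)^i • (fh (gT lam k) k η x • f x))))
      + (2 * (u + (-1)^k)) • (ga x • ((ip x x)^i • (fh (gQ lam k) (k-1) η x • vE E η (vE E x (f x))))))
      + (2 * (u + (-1)^k)) • (ga x • ((ip x x)^i • (fh (Polynomial.X * gQ lam k) k η x • f x))) := by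
  rw [Br, fh_XgQ]
  generalize vE E η (vE E x (f x)) = g
  simp only [rs]
  push_cast
  module

lemma Br_int (E : Fin m → V →L[ℝ] V) (u : ℂ) (lam : ℝ) (η : Fin m → ℝ) (k i : ℕ)
    {f : (Fin m → ℝ) → V} {f'} (hf : DG f f') {g'} (hg : DG (fun x => vE E η (vE E x (f x))) g') :
    Integrable fun x => ga x • ((ip x x)^i • Br E u lam η k f x) := by
  have hI := Br_hI η k i hf
  have hI2 := Br_hI2 lam η k i hg
  simp only [Br_exp]
  exact iadd (iadd (iadd (csmul (hI _) _) (csmul (hI _) _)) (csmul hI2 _)) (csmul (hI _) _)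

lemma T_gen (E : Fin m → V →L[ℝ] V) (u : ℂ) (lam : ℝ) (η : Fin m → ℝ) (k i kap : ℕ)
    (f : (Fin m → ℝ) → V) {f'} (hf : DG f f') {g'} (hg : DG (fun x => vE E η (vE E x (f x))) g')
    (v : V) (q : ℝ)
    (hP : ∀ p : Polynomial ℝ, (∀ n, p.coeff n ≠ 0 → n ≤ k ∧ Even (k - n)) →
      ∫ x, ga x • ((ip x x)^i • (fh p k η x • f x)) = (cc m lam k kap i * Lam lam kap p) • v)
    (hQ : ∫ x, ga x • ((ip x x)^i • (fh (gQ lam k) (k-1) η x • vE E η (vE E x (f x)))) =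
      (cc m lam k kap i * q) • (-v)) :
    ∫ x, ga x • ((ip x x)^i • Br E u lam η k f x) =
      ((cc m lam k kap i : ℂ) * ((u + (-1)^k) * (Lam lam kap (gp lam k) : ℂ)
        - (u - (-1)^k) * (Lam lam kap (gT lam k) : ℂ)
        - 2 * (u + (-1)^k) * (q - Lam lam kap (Polynomial.X * gQ lam k) : ℝ))) • v := by
  have hI := Br_hI η k i hf
  have hI2 := Br_hI2 lam η k i hg
  have h1 := Br_exp E u lam η k i f
  simp only [h1]
  rw [integral_add (iadd (iadd (csmul (hI _) _) (csmul (hI _) _)) (csmul hI2 _)) (csmul (hI _) _),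
    integral_add (iadd (csmul (hI _) _) (csmul (hI _) _)) (csmul hI2 _),
    integral_add (csmul (hI _) _) (csmul (hI _) _), integral_smul, integral_smul, integral_smul,
    integral_smul, hP _ (gp_coeff _ _), hP _ (gT_coeff _ _), hQ, hP _ (XgQ_coeff _ _)]
  simp only [rs]
  push_cast
  module

variable {E : Fin m → V →L[ℝ] V} {l : ℕ} {M : (Fin m → ℝ) → V}

lemma T1 (h : MG E l M) (hm : 2 ≤ m) (u : ℂ) (lam : ℝ) (hlam : lam = ((m:ℝ)-2)/2)
    (η : Fin m → ℝ) (hη : ip η η = 1) (k i : ℕ) (hu : (k:ℝ) + lam = 0 → u + (-1)^k = 0) :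
    ∫ x, ga x • ((ip x x)^i • Br E u lam η k M x) =
      ((cc m lam k l i : ℂ) * (if k = l then 2 * (-1)^k * ((1 / Real.Gamma (lam + 1) : ℝ) : ℂ) else 0)) • M η := by
  have hl : 0 ≤ lam := by
    have : (2:ℝ) ≤ m := by exact_mod_cast hm
    rw [hlam]; linarith
  rw [← eig1 u lam hl k l hu]
  refine T_gen E u lam η k i l M h.dg (h.xdg.clm (vE E η)) (M η) _ (fun p hp => ?_) ?_
  · rw [FH h.dg hm h.hom η (M η) (h.J_val η hη) p k i hp lam hlam, cc]
    congr 1; ring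
  · rcases k with _ | k
    · simp [gQ, fh]
    · have h1 := FH (h.xdg.clm (vE E η)) hm (l := l+1) (fun c x => by rw [h.xhom, map_smul]) η (-M η)
        (fun n => by
          have a := vE_clm_int (E := E) η η n h.xdg
          rw [h.J_xval η hη, map_smul, vE_sq h.rel, hη, neg_smul, one_smul] at a
          exact a.symm) (gQ lam (k+1)) k i (gQ_coeff lam (k+1)) lam hlam
      rw [Nat.add_sub_cancel, h1, cc]
      rw [show ((k:ℝ) + (l+1:ℕ)) = ((k+1:ℕ):ℝ) + l by push_cast; ring]
      congr 1; ring

lemma T2 (h : MG E l M) (hm : 2 ≤ m) (u : ℂ) (lam : ℝ) (hlam : lam = ((m:ℝ)-2)/2)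
    (η : Fin m → ℝ) (hη : ip η η = 1) (k i : ℕ) (hu : (k:ℝ) + lam = 0 → u + (-1)^k = 0) :
    ∫ x, ga x • ((ip x x)^i • Br E u lam η k (fun x => vE E x (M x)) x) =
      ((cc m lam k (l+1) i : ℂ) * (if k = l + 1 then - 2 * u * ((1 / Real.Gamma (lam + 1) : ℝ) : ℂ) else 0))
        • vE E η (M η) := by
  have hl : 0 ≤ lam := by
    have : (2:ℝ) ≤ m := by exact_mod_cast hm
    rw [hlam]; linarith
  rw [← eig2 u lam hl k l hu]
  have e : ∀ x, vE E η (vE E x (vE E x (M x))) = ip x x • (-(vE E η (M x))) := fun x => by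
    rw [vE_sq h.rel, map_smul, neg_smul, smul_neg]
  have hg : ∃ g', DG (fun x => vE E η (vE E x (vE E x (M x)))) g' := by
    simp only [e]
    have : ∀ x, -(vE E η (M x)) = (-(vE E η)) (M x) := fun x => by simp
    simp only [this]
    exact ⟨_, DG.ipself.smul (h.dg.clm (-(vE E η)))⟩
  obtain ⟨g', hg⟩ := hg
  refine T_gen E u lam η k i (l+1) (fun x => vE E x (M x)) h.xdg hg (vE E η (M η)) _ (fun p hp => ?_) ?_
  · rw [FH h.xdg hm h.xhom η _ (h.J_xval η hη) p k i hp lam hlam, cc]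
    congr 1; ring
  · rcases k with _ | k
    · simp [gQ, fh]
    · have h1 := FH (h.dg.clm (-(vE E η))) hm (l := l) (fun c x => by rw [h.hom, map_smul]) η (-vE E η (M η))
        (fun n => by
          have a := vE_clm_int (E := E) η η n h.dg
          rw [h.J_val η hη, map_smul] at a
          rw [smul_neg, a, Jm, ← integral_neg]
          simp) (gQ lam (k+1)) k (i+1) (gQ_coeff lam (k+1)) lam hlam
      rw [Nat.add_sub_cancel]
      have h2 : ∀ x, ga x • ((ip x x)^i • (fh (gQ lam (k+1)) k η x • vE E η (vE E x (vE E x (M x))))) =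
          ga x • ((ip x x)^(i+1) • (fh (gQ lam (k+1)) k η x • (-(vE E η)) (M x))) := by
        intro x
        rw [e, neg_apply, smul_comm _ (ip x x), smul_smul _ (ip x x), ← pow_succ]
      simp only [h2]
      rw [h1, cc]
      rw [show ((k:ℝ) + l)/2 + (i+1:ℕ) = (((k+1:ℕ):ℝ) + (l+1:ℕ))/2 + i by push_cast; ring,
        show ((k:ℝ) + l)/2 + lam + 1 + (i+1:ℕ) = (((k+1:ℕ):ℝ) + (l+1:ℕ))/2 + lam + 1 + i by push_cast; ring]
      congr 1; ring

end T
end Part7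

section Part8
set_option linter.unusedSectionVars false
section L
variable {m : ℕ} {V : Type*} [NormedAddCommGroup V] [NormedSpace ℂ V] [NormedSpace ℝ V]
  [IsScalarTower ℝ ℂ V] [CompleteSpace V]

def DD (lam : ℝ) : ℝ := 3 * (1 + (lam + 1))

lemma DD_ge (lam : ℝ) (hl : 0 ≤ lam) : 1 ≤ DD lam := by rw [DD]; linarith

lemma zD (z D : ℝ) (hz : 0 ≤ z) (hD : 1 ≤ D) (g : ℝ) (k a b : ℕ) (ha : a ≤ k) (hb : b ≤ k) (hg : |g| ≤ D^b) :
    |z^a * g| ≤ ((1+z)*D)^k := by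
  rw [abs_mul, abs_of_nonneg (by positivity), mul_pow]
  refine mul_le_mul ?_ (hg.trans (pow_le_pow_right₀ hD hb)) (abs_nonneg _) (by positivity)
  calc z^a ≤ (1+z)^a := by gcongr; linarith
    _ ≤ (1+z)^k := pow_le_pow_right₀ (by linarith) ha

lemma gb1 (lam : ℝ) (hl : 0 ≤ lam) (z w : ℝ) (hz : 0 ≤ z) (hw : |w| ≤ 1) (k : ℕ) :
    |z^k * (gp lam k).eval w| ≤ ((1+z)*DD lam)^k := by
  refine zD z _ hz (DD_ge lam hl) _ k k k le_rfl le_rfl ?_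
  rw [gp_eval]
  refine (geg_bd lam hl w hw k).trans ?_
  rw [DD]; gcongr; linarith

lemma gb3 (lam : ℝ) (hl : 0 ≤ lam) (z w : ℝ) (hz : 0 ≤ z) (hw : |w| ≤ 1) (k : ℕ) :
    |z^(k-1) * (gQ lam k).eval w| ≤ ((1+z)*DD lam)^k := by
  have hD := DD_ge lam hl
  refine zD z _ hz hD _ k (k-1) (k-1) (by omega) (by omega) ?_
  rw [gQ]; split_ifs
  · rw [gp_eval]; exact geg_bd (lam+1) (by linarith) w hw _
  · simp; positivity

lemma gb2 (lam : ℝ) (hl : 0 ≤ lam) (z w : ℝ) (hz : 0 ≤ z) (hw : |w| ≤ 1) (k : ℕ) :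
    |z^k * (gT lam k).eval w| ≤ 2 * ((1+z)*DD lam)^k := by
  have hD := DD_ge lam hl
  rw [gT_eval, gegT, mul_sub, two_mul]
  refine (abs_sub _ _).trans (add_le_add ?_ ?_)
  · exact zD z _ hz hD _ k k k le_rfl le_rfl (geg_bd (lam+1) (by linarith) w hw _)
  · refine zD z _ hz hD _ k k (k-2) le_rfl (by omega) ?_
    split_ifs
    · exact geg_bd (lam+1) (by linarith) w hw _
    · simp; positivity

lemma upow (u : ℂ) (k : ℕ) : ‖u + (-1)^k‖ ≤ ‖u‖ + 1 := (norm_add_le _ _).trans (by simp)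
lemma upow' (u : ℂ) (k : ℕ) : ‖u - (-1)^k‖ ≤ ‖u‖ + 1 := (norm_sub_le _ _).trans (by simp)

def WV (E : Fin m → V →L[ℝ] V) (x y : Fin m → ℝ) (v : V) : V := - vE E y (vE E x v) - ip x y • v

/-- the kernel acting on the module -/
def KV (E : Fin m → V →L[ℝ] V) (u : ℂ) (lam : ℝ) (x y : Fin m → ℝ) (v : V) : V :=
  (AfunR u lam (ip x y / (nrm x * nrm y)) (nrm x * nrm y)
    + BfunR u lam (ip x y / (nrm x * nrm y)) (nrm x * nrm y)) • v
  + CfunR u lam (ip x y / (nrm x * nrm y)) (nrm x * nrm y) • WV E x y v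

lemma WV_smul (E : Fin m → V →L[ℝ] V) (x y : Fin m → ℝ) (r : ℝ) (v : V) :
    WV E x y (r • v) = r • WV E x y v := by
  simp only [WV, map_smul, smul_sub, smul_neg, smul_comm r (ip x y)]

lemma KV_smul (E : Fin m → V →L[ℝ] V) (u : ℂ) (lam : ℝ) (x y : Fin m → ℝ) (r : ℝ) (v : V) :
    KV E u lam x y (r • v) = r • KV E u lam x y v := by
  simp only [KV, WV_smul]
  simp only [rs]
  module

lemma vE_smul (E : Fin m → V →L[ℝ] V) (r : ℝ) (x : Fin m → ℝ) (v : V) :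
    vE E (r • x) v = r • vE E x v := by
  simp only [vE_apply, Finset.smul_sum, smul_smul]; rfl

lemma Br_eq (E : Fin m → V →L[ℝ] V) (u : ℂ) (lam : ℝ) (x y η : Fin m → ℝ) (hy : y = nrm y • η) (k : ℕ)
    (f : (Fin m → ℝ) → V) :
    ((nrm y ^ k : ℝ) : ℂ) • Br E u lam η k f x =
    ((u + (-1)^k) * (((nrm x * nrm y)^k * (gp lam k).eval (ip x y / (nrm x * nrm y)) : ℝ) : ℂ)
      - (u - (-1)^k) * (((nrm x * nrm y)^k * (gT lam k).eval (ip x y / (nrm x * nrm y)) : ℝ) : ℂ)) • f x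
    - (2 * (u + (-1)^k) * (((nrm x * nrm y)^(k-1) * (gQ lam k).eval (ip x y / (nrm x * nrm y)) : ℝ) : ℂ)) •
      WV E x y (f x) := by
  rw [fh_eval _ k (gp_coeff lam k) x y η hy, fh_eval _ k (gT_coeff lam k) x y η hy,
    fh_eval _ (k-1) (gQ_coeff lam k) x y η hy]
  have h1 : WV E x y (f x) = (nrm y : ℂ) • (- vE E η (vE E x (f x)) - ip x η • f x) := by
    have a : vE E y (vE E x (f x)) = nrm y • vE E η (vE E x (f x)) := by
      conv_lhs => rw [hy]
      rw [vE_smul]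
    have b : ip x y = nrm y * ip x η := by
      conv_lhs => rw [hy]
      rw [ip_smul_r]
    rw [WV, a, b, ← rs, smul_sub, smul_neg, smul_smul]
  rw [h1, Br]
  generalize - vE E η (vE E x (f x)) - ip x η • f x = g
  have h2 : fh (gQ lam k) (k-1) η x * nrm y ^ k = nrm y ^ (k-1) * fh (gQ lam k) (k-1) η x * nrm y := by
    rcases k with _ | k
    · simp [gQ, fh]
    · rw [Nat.add_sub_cancel]; ring
  have h3 := congrArg (fun r : ℝ => (r:ℂ)) h2
  push_cast at h3 ⊢
  rw [smul_sub, smul_smul, smul_smul, smul_smul]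
  congr 1
  · congr 1; ring
  · congr 1; linear_combination (2 * (u + (-1)^k)) * h3

def NN (lam : ℝ) : ℝ := (2:ℝ)^(lam - 1) * Real.Gamma (lam + 1)

lemma hs_kernel (E : Fin m → V →L[ℝ] V) (u : ℂ) (lam : ℝ) (hl : 0 ≤ lam) (x y η : Fin m → ℝ)
    (hy : y = nrm y • η) (f : (Fin m → ℝ) → V) :
    HasSum (fun p : ℕ × ℕ => ((NN lam * nrm y ^ p.1 * bt lam p.1 p.2 (nrm x * nrm y) : ℝ) : ℂ) •
      Br E u lam η p.1 f x) (KV E u lam x y (f x)) := by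
  have hz : 0 ≤ nrm x * nrm y := mul_nonneg (nrm_nonneg x) (nrm_nonneg y)
  have hw := w_le x y
  have hBr := fun k => Br_eq E u lam x y η hy k f
  unfold KV
  generalize nrm x * nrm y = z at *
  generalize ip x y / z = w at *
  have hA := hs_bessel lam hl z (fun k => (u + (-1)^k) * ((z^k * (gp lam k).eval w : ℝ) : ℂ))
    (‖u‖ + 1) ((1+z) * DD lam) (fun k => by
      rw [norm_mul, Complex.norm_real, Real.norm_eq_abs]
      exact mul_le_mul (upow u k) (gb1 lam hl z w hz hw k) (abs_nonneg _) (by positivity))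
  have hB := hs_bessel lam hl z (fun k => (u - (-1)^k) * ((z^k * (gT lam k).eval w : ℝ) : ℂ))
    ((‖u‖ + 1) * 2) ((1+z) * DD lam) (fun k => by
      rw [norm_mul, Complex.norm_real, Real.norm_eq_abs, mul_assoc]
      exact mul_le_mul (upow' u k) (gb2 lam hl z w hz hw k) (abs_nonneg _) (by positivity))
  have hC := hs_bessel lam hl z (fun k => (u + (-1)^k) * ((z^(k-1) * (gQ lam k).eval w : ℝ) : ℂ))
    (‖u‖ + 1) ((1+z) * DD lam) (fun k => by
      rw [norm_mul, Complex.norm_real, Real.norm_eq_abs]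
      exact mul_le_mul (upow u k) (gb3 lam hl z w hz hw k) (abs_nonneg _) (by positivity))
  have eA : AfunR u lam w z = (NN lam : ℂ) * ∑' k : ℕ, (u + (-1)^k) * ((z^k * (gp lam k).eval w : ℝ) : ℂ)
      * (besselJt ((k:ℝ)+lam) z : ℂ) := by
    rw [AfunR, NN]; congr 1
    refine tsum_congr fun k => ?_
    rw [gp_eval]; push_cast; ring
  have eB : BfunR u lam w z = -(NN lam : ℂ) * ∑' k : ℕ, (u - (-1)^k) * ((z^k * (gT lam k).eval w : ℝ) : ℂ)
      * (besselJt ((k:ℝ)+lam) z : ℂ) := by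
    rw [BfunR, NN]; congr 1
    refine tsum_congr fun k => ?_
    rw [gT_eval]; push_cast; ring
  have eC : CfunR u lam w z = -((2 * NN lam : ℝ) : ℂ) * ∑' k : ℕ, (u + (-1)^k) * ((z^(k-1) * (gQ lam k).eval w : ℝ) : ℂ)
      * (besselJt ((k:ℝ)+lam) z : ℂ) := by
    have : (2:ℝ)^lam = 2 * 2^(lam-1) := by
      rw [Real.rpow_sub_one (by norm_num)]; ring
    rw [CfunR, NN, this, mul_assoc]; congr 1
    refine tsum_congr fun k => ?_
    have : (gQ lam k).eval w = if 1 ≤ k then geg (lam + 1) (k - 1) w else 0 := by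
      rw [gQ]; split_ifs <;> simp [gp_eval]
    rw [this]; push_cast; ring
  have H := (((hA.mul_left (NN lam : ℂ)).add (hB.mul_left (-(NN lam : ℂ)))).smul_const (f x)).add
    ((hC.mul_left (-((2 * NN lam : ℝ) : ℂ))).smul_const (WV E x y (f x)))
  rw [← eA, ← eB, ← eC] at H
  refine (congrArg (fun g => HasSum g _) (funext fun p => ?_)).mpr H
  have h5 : ((NN lam * nrm y ^ p.1 * bt lam p.1 p.2 z : ℝ) : ℂ) • Br E u lam η p.1 f x =
      ((NN lam * bt lam p.1 p.2 z : ℝ) : ℂ) • (((nrm y ^ p.1 : ℝ) : ℂ) • Br E u lam η p.1 f x) := by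
    rw [smul_smul]; congr 1; push_cast; ring
  rw [h5, hBr]
  push_cast
  module

end L
end Part8

section Part9
set_option linter.unusedSectionVars false
section L
variable {m : ℕ} {V : Type*} [NormedAddCommGroup V] [NormedSpace ℂ V] [NormedSpace ℝ V]
  [IsScalarTower ℝ ℂ V] [CompleteSpace V]

lemma NN_nonneg (lam : ℝ) (hl : 0 ≤ lam) : 0 ≤ NN lam := by
  have : 0 < Real.Gamma (lam+1) := Real.Gamma_pos_of_pos (by positivity)
  rw [NN]; positivity

def hB (E : Fin m → V →L[ℝ] V) (u : ℂ) (y : Fin m → ℝ) (f : (Fin m → ℝ) → V) (x : Fin m → ℝ) : ℝ :=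
  (3 * (‖u‖+1)) * ‖f x‖ + (2 * (‖u‖+1)) * ‖WV E x y (f x)‖

lemma hB_nonneg (E : Fin m → V →L[ℝ] V) (u : ℂ) (y : Fin m → ℝ) (f : (Fin m → ℝ) → V) (x : Fin m → ℝ) :
    0 ≤ hB E u y f x := by rw [hB]; positivity

lemma Br_bd (E : Fin m → V →L[ℝ] V) (u : ℂ) (lam : ℝ) (hl : 0 ≤ lam) (x y η : Fin m → ℝ)
    (hy : y = nrm y • η) (f : (Fin m → ℝ) → V) (k : ℕ) :
    ‖((nrm y ^ k : ℝ) : ℂ) • Br E u lam η k f x‖ ≤ ((1 + nrm y * S1 x) * DD lam)^k * hB E u y f x := by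
  rw [Br_eq E u lam x y η hy k f]
  have hz : 0 ≤ nrm x * nrm y := mul_nonneg (nrm_nonneg x) (nrm_nonneg y)
  have hw := w_le x y
  have hD := DD_ge lam hl
  have hP : ((1 + nrm x * nrm y) * DD lam)^k ≤ ((1 + nrm y * S1 x) * DD lam)^k := by
    have h1 : nrm x * nrm y ≤ nrm y * S1 x := by
      rw [mul_comm]; exact mul_le_mul_of_nonneg_left (nrm_le_S1 x) (nrm_nonneg y)
    gcongr
  have g1 := (gb1 lam hl _ _ hz hw k).trans hP
  have g2 := (gb2 lam hl _ _ hz hw k).trans (mul_le_mul_of_nonneg_left hP zero_le_two)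
  have g3 := (gb3 lam hl _ _ hz hw k).trans hP
  set P := ((1 + nrm y * S1 x) * DD lam)^k
  have hP0 : 0 ≤ P := le_trans (abs_nonneg _) g1
  have u1 := upow u k
  have u2 := upow' u k
  refine (norm_sub_le _ _).trans ?_
  rw [norm_smul, norm_smul, hB, mul_add P]
  refine add_le_add ?_ ?_
  · rw [← mul_assoc]
    refine mul_le_mul_of_nonneg_right ?_ (norm_nonneg _)
    refine (norm_sub_le _ _).trans ?_
    rw [norm_mul, norm_mul, Complex.norm_real, Complex.norm_real, Real.norm_eq_abs, Real.norm_eq_abs]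
    have a1 := mul_le_mul u1 g1 (abs_nonneg _) (by positivity)
    have a2 := mul_le_mul u2 g2 (abs_nonneg _) (by positivity)
    linarith
  · rw [← mul_assoc]
    refine mul_le_mul_of_nonneg_right ?_ (norm_nonneg _)
    rw [norm_mul, norm_mul, Complex.norm_real, Real.norm_eq_abs]
    have a1 := mul_le_mul u1 g3 (abs_nonneg _) (by positivity)
    have : ‖(2:ℂ)‖ = 2 := by simp
    rw [this]; linarith

lemma Ft_bd (E : Fin m → V →L[ℝ] V) (u : ℂ) (lam : ℝ) (hl : 0 ≤ lam) (x y η : Fin m → ℝ)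
    (hy : y = nrm y • η) (f : (Fin m → ℝ) → V) (k s : ℕ) :
    ‖((NN lam * nrm y ^ k * bt lam k s (nrm x * nrm y) : ℝ) : ℂ) • Br E u lam η k f x‖ ≤
      (NN lam * (Real.Gamma (lam+1))⁻¹ * hB E u y f x) *
      ((((1 + nrm y * S1 x) * DD lam)^k / (k.factorial:ℝ)) * ((nrm y * S1 x)^(2*s) / ((2*s).factorial : ℝ))) := by
  have e : ((NN lam * nrm y ^ k * bt lam k s (nrm x * nrm y) : ℝ) : ℂ) • Br E u lam η k f x =
      ((NN lam * bt lam k s (nrm x * nrm y) : ℝ) : ℂ) • (((nrm y ^ k : ℝ) : ℂ) • Br E u lam η k f x) := by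
    rw [smul_smul]; congr 1; push_cast; ring
  rw [e, norm_smul, Complex.norm_real, Real.norm_eq_abs, abs_mul, abs_of_nonneg (NN_nonneg lam hl)]
  have h0 : 0 < Real.Gamma (lam+1) := Real.Gamma_pos_of_pos (by positivity)
  have hz : 0 ≤ nrm x * nrm y := mul_nonneg (nrm_nonneg x) (nrm_nonneg y)
  have h1 : nrm x * nrm y ≤ nrm y * S1 x := by
    rw [mul_comm]; exact mul_le_mul_of_nonneg_left (nrm_le_S1 x) (nrm_nonneg y)
  have hb : |bt lam k s (nrm x * nrm y)| ≤ (Real.Gamma (lam+1))⁻¹ * ((1 / (k.factorial:ℝ)) * ((nrm y * S1 x)^(2*s) / ((2*s).factorial : ℝ))) :=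
    (bt_bd lam hl k s _).trans (by gcongr)
  have hN := NN_nonneg lam hl
  have hZ : 0 ≤ nrm y * S1 x := hz.trans h1
  refine (mul_le_mul (mul_le_mul_of_nonneg_left hb hN) (Br_bd E u lam hl x y η hy f k) (norm_nonneg _)
    (by positivity)).trans_eq ?_
  ring

lemma bt_mul (lam : ℝ) (k s : ℕ) (x : Fin m → ℝ) (r : ℝ) :
    bt lam k s (nrm x * r) = (ip x x)^s * bt lam k s r := by
  rw [bt, bt, ← nrm_sq, ← pow_mul, show nrm x * r / 2 = nrm x * (r/2) by ring, mul_pow]; ring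

lemma F_eq (E : Fin m → V →L[ℝ] V) (u : ℂ) (lam a ρ : ℝ) (j : ℕ) (x η : Fin m → ℝ)
    (f : (Fin m → ℝ) → V) (k s : ℕ) :
    (lag a j (ip x x) * ga x) • (((NN lam * ρ ^ k * bt lam k s (nrm x * ρ) : ℝ) : ℂ) • Br E u lam η k f x) =
    ((NN lam * ρ ^ k * bt lam k s ρ : ℝ) : ℂ) • ∑ i ∈ Finset.range (j+1),
      lc a j i • (ga x • ((ip x x)^(s+i) • Br E u lam η k f x)) := by
  simp only [smul_smul, ← Finset.sum_smul]
  rw [bt_mul, lag_eq, Finset.sum_mul]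
  simp only [rs, smul_smul]
  congr 1
  rw [← Complex.ofReal_mul, ← Complex.ofReal_mul, Finset.sum_mul, Finset.mul_sum]
  congr 1
  refine Finset.sum_congr rfl fun i _ => ?_
  rw [pow_add]; ring

lemma cont_lag (a : ℝ) (j : ℕ) : Continuous fun x : Fin m → ℝ => lag a j (ip x x) := by
  simp only [lag_eq]
  exact continuous_finsetSum _ fun i _ => continuous_const.mul (cont_ipself.pow i)

lemma EG_lag (a : ℝ) (j : ℕ) : EG fun x : Fin m → ℝ => lag a j (ip x x) := by
  simp only [lag_eq]
  exact EG.sum _ fun i _ => (EG.const (lc a j i)).smul (EG.ipself.pow i)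

lemma EG.nrm' {W : Type*} [NormedAddCommGroup W] [NormedSpace ℝ W] {f : (Fin m → ℝ) → W} (hf : EG f) :
    EG fun x => ‖f x‖ := hf.mono fun x => by simp

lemma cont_S1 : Continuous fun x : Fin m → ℝ => S1 x := by
  unfold S1; fun_prop

lemma EG_hB {E : Fin m → V →L[ℝ] V} (u : ℂ) (y : Fin m → ℝ) {f : (Fin m → ℝ) → V} {f' g'}
    (hf : DG f f') (hg : DG (fun x => vE E x (f x)) g') : EG (fun x => hB E u y f x) ∧
    Continuous (fun x => hB E u y f x) := by
  have h1 : DG (fun x => WV E x y (f x)) _ :=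
    (DG.sum (Finset.univ : Finset Bool) (f := fun b x => if b then (-(vE E y)) (vE E x (f x)) else (ip x y) • (-f x))
      (f' := fun b => if b then _ else _) (fun b _ => by
        cases b
        · simpa using (DG.inn y).smul (hf.clm (-ContinuousLinearMap.id ℝ V))
        · simpa using hg.clm (-(vE E y)))) |> fun h => by
          simpa [WV, sub_eq_add_neg] using h
  have c1 := hf.diff.continuous
  have c2 := h1.diff.continuous
  unfold hB
  refine ⟨(EG.smul (EG.const _) hf.eg.nrm').add (EG.smul (EG.const _) h1.eg.nrm'), by fun_prop⟩
end L
end Part9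

section Part10
set_option linter.unusedSectionVars false
section L
variable {m : ℕ} {V : Type*} [NormedAddCommGroup V] [NormedSpace ℂ V] [NormedSpace ℝ V]
  [IsScalarTower ℝ ℂ V] [CompleteSpace V]

lemma scal (m : ℕ) (lam : ℝ) (hl : 0 ≤ lam) (κ s i : ℕ) (ρ c : ℝ) :
    NN lam * ρ^κ * bt lam κ s ρ * (c * (cc m lam κ κ (s+i) * (2 / Real.Gamma (lam+1)))) =
    (2*Real.pi)^((m:ℝ)/2) * ρ^κ * ((-(ρ^2)/2)^s / s.factorial *
      (c * (2^i * Real.Gamma ((s:ℝ)+i+((κ:ℝ)+lam)+1) / Real.Gamma ((s:ℝ)+((κ:ℝ)+lam)+1)))) := by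
  have h0 : Real.Gamma (lam+1) ≠ 0 := (Real.Gamma_pos_of_pos (by positivity)).ne'
  have h1 : Real.Gamma ((s:ℝ)+((κ:ℝ)+lam)+1) ≠ 0 := (Real.Gamma_pos_of_pos (by positivity)).ne'
  have e1 : ((κ:ℝ)+κ)/2 + lam + 1 + ((s+i:ℕ):ℝ) = (s:ℝ)+i+((κ:ℝ)+lam)+1 := by push_cast; ring
  have e2 : (2:ℝ)^(((κ:ℝ)+κ)/2 + ((s+i:ℕ):ℝ)) = 2^κ * (2^s * 2^i) := by
    rw [show ((κ:ℝ)+κ)/2 + ((s+i:ℕ):ℝ) = ((κ+(s+i):ℕ):ℝ) by push_cast; ring, Real.rpow_natCast]; ring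
  have e3 : (2:ℝ)^((κ:ℝ)+lam) = 2^κ * 2^lam := by
    rw [Real.rpow_add two_pos, Real.rpow_natCast]
  have e4 : (2:ℝ)^(lam-1) = 2^lam/2 := by rw [Real.rpow_sub two_pos, Real.rpow_one]
  have e5 : (-(ρ^2)/2)^s = (-1)^s * (ρ/2)^(2*s) * 2^s := by
    rw [pow_mul, ← mul_pow, ← mul_pow]; congr 1; ring
  rw [NN, bt, cc, e1, e2, e3, e4, e5]
  have h2 : (2:ℝ)^lam ≠ 0 := by positivity
  have h3 : (s.factorial:ℝ) ≠ 0 := by positivity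
  generalize Real.Gamma ((s:ℝ)+((κ:ℝ)+lam)+1) = G at *
  generalize Real.Gamma ((s:ℝ)+i+((κ:ℝ)+lam)+1) = G' at *
  generalize (2:ℝ)^lam = B at *
  generalize (2*Real.pi)^((m:ℝ)/2) = P at *
  field_simp

lemma bd_int {E : Fin m → V →L[ℝ] V} (u : ℂ) (y : Fin m → ℝ) {f : (Fin m → ℝ) → V} {f' g'}
    (hf : DG f f') (hg : DG (fun x => vE E x (f x)) g') (a C D : ℝ) (hD : 0 ≤ D) (j : ℕ) :
    Integrable (fun x : Fin m → ℝ => (|lag a j (ip x x)| * ga x * (C * hB E u y f x)) *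
      (Real.exp ((1 + nrm y * S1 x) * D) * Real.cosh (nrm y * S1 x))) := by
  obtain ⟨h1, h2⟩ := EG_hB u y hf hg
  have hn := nrm_nonneg y
  have c1 := cont_S1 (m := m)
  have c2 := cont_lag (m := m) a j
  have k1 : EG (fun x : Fin m → ℝ => Real.exp ((1 + nrm y * S1 x) * D)) :=
    ((EG.const (Real.exp D)).smul (EG.expS (nrm y * D) (by positivity))).mono fun x => by
      rw [smul_eq_mul, ← Real.exp_add]; apply le_of_eq; congr 2; ring
  have k2 : EG (fun x : Fin m → ℝ => Real.cosh (nrm y * S1 x)) :=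
    (EG.expS (nrm y) hn).mono fun x => by
      have := mul_nonneg hn (S1_nonneg x)
      rw [Real.norm_of_nonneg (Real.exp_pos _).le, Real.norm_of_nonneg (Real.cosh_pos _).le, Real.cosh_eq]
      have : Real.exp (-(nrm y * S1 x)) ≤ Real.exp (nrm y * S1 x) := Real.exp_le_exp.2 (by linarith)
      linarith
  have k3 := (((EG_lag (m := m) a j).nrm').smul ((EG.const C).smul h1)).smul (k1.smul k2)
  have c3 : Continuous (fun x : Fin m → ℝ => Real.cosh (nrm y * S1 x)) := Real.continuous_cosh.comp (by fun_prop)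
  refine (k3.integrable (Continuous.aestronglyMeasurable ?_)).congr (Filter.Eventually.of_forall fun x => ?_)
  · simp only [smul_eq_mul]; fun_prop
  · simp only [smul_eq_mul, Real.norm_eq_abs]; ring

theorem gen_main {E : Fin m → V →L[ℝ] V} (u : ℂ) (lam : ℝ) (hl : 0 ≤ lam) (y η : Fin m → ℝ)
    (hy : y = nrm y • η) {f : (Fin m → ℝ) → V} {f' g'}
    (hf : DG f f') (hg : DG (fun x => vE E x (f x)) g') (κ j : ℕ) (ε : ℂ) (v : V)
    (hT : ∀ k i, ∫ x, ga x • ((ip x x)^i • Br E u lam η k f x) =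
      ((cc m lam k κ i : ℂ) * (if k = κ then ε * ((2 / Real.Gamma (lam+1) : ℝ):ℂ) else 0)) • v) :
    ∫ x, KV E u lam x y ((lag ((κ:ℝ)+lam) j (ip x x) * ga x) • f x) =
      ((((2*Real.pi)^((m:ℝ)/2) * nrm y^κ * ((-1)^j * (lag ((κ:ℝ)+lam) j (ip y y) * Real.exp (-(ip y y)/2))) : ℝ) : ℂ) * ε) • v := by
  set a := (κ:ℝ)+lam with ha
  set ρ := nrm y with hρ
  have hρ0 : 0 ≤ ρ := nrm_nonneg y
  have hD := DD_ge lam hl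
  have hBi := fun k i => Br_int E u lam η k i hf (hg.clm (vE E η))
  let C0 := NN lam * (Real.Gamma (lam+1))⁻¹
  have main := hasSum_integral_of_dominated_convergence (μ := (volume : Measure (Fin m → ℝ)))
    (F := fun (p : ℕ × ℕ) x => (lag a j (ip x x) * ga x) •
      (((NN lam * ρ ^ p.1 * bt lam p.1 p.2 (nrm x * ρ) : ℝ) : ℂ) • Br E u lam η p.1 f x))
    (f := fun x => KV E u lam x y ((lag a j (ip x x) * ga x) • f x))
    (fun p x => (|lag a j (ip x x)| * ga x * (C0 * hB E u y f x)) *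
      ((((1 + ρ * S1 x) * DD lam)^p.1 / (p.1.factorial:ℝ)) * ((ρ * S1 x)^(2*p.2) / ((2*p.2).factorial : ℝ))))
    ?_ ?_ ?_ ?_ ?_
  · have hI : ∀ p : ℕ × ℕ, ∫ x, (lag a j (ip x x) * ga x) •
      (((NN lam * ρ ^ p.1 * bt lam p.1 p.2 (nrm x * ρ) : ℝ) : ℂ) • Br E u lam η p.1 f x) =
      if p.1 = κ then ((((2*Real.pi)^((m:ℝ)/2) * ρ^κ * ((-(ρ^2)/2)^p.2 / p.2.factorial * ∑ i ∈ Finset.range (j+1), lc a j i * (2^i * Real.Gamma ((p.2:ℝ)+i+a+1) / Real.Gamma ((p.2:ℝ)+a+1))) : ℝ) : ℂ) * ε) • v else 0 := by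
      rintro ⟨k, s⟩
      simp only [F_eq]
      rw [integral_smul, integral_finsetSum _ fun i _ => ismul (hBi k (s+i)) _]
      simp only [integral_smul, hT]
      split_ifs with h
      · subst h
        simp only [rs, smul_smul, ← Finset.sum_smul]
        congr 1
        rw [Finset.mul_sum, Finset.mul_sum, Finset.mul_sum, Complex.ofReal_sum, Finset.sum_mul]
        refine Finset.sum_congr rfl fun i _ => ?_
        rw [← scal m lam hl k s i ρ]
        push_cast; ring
      · simp
    have main2 : HasSum (fun p : ℕ × ℕ => if p.1 = κ then ((((2*Real.pi)^((m:ℝ)/2) * ρ^κ * ((-(ρ^2)/2)^p.2 / p.2.factorial * ∑ i ∈ Finset.range (j+1), lc a j i * (2^i * Real.Gamma ((p.2:ℝ)+i+a+1) / Real.Gamma ((p.2:ℝ)+a+1))) : ℝ) : ℂ) * ε) • v else 0) (∫ x, KV E u lam x y ((lag a j (ip x x) * ga x) • f x)) :=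
      (congrArg (fun f => HasSum f _) (funext fun s => hI s)).mp main
    have inj : Function.Injective (fun s : ℕ => (κ, s)) := fun s t h => by simpa using h
    rw [← inj.hasSum_iff] at main2
    · simp only [Function.comp_def, if_true] at main2
      have h1 := hankel a (by positivity) j (ρ^2)
      have h2 := Complex.hasSum_ofReal.mpr (h1.mul_left ((2*Real.pi)^((m:ℝ)/2) * ρ^κ))
      have h3 := (h2.mul_right ε).smul_const v
      have := main2.unique h3
      rw [this, hρ, nrm_sq]
    · rintro ⟨k, s⟩ h
      simp only [Set.mem_range, not_exists, Prod.mk.injEq, not_and] at h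
      rw [if_neg]
      rintro rfl
      exact h s rfl rfl
  · rintro ⟨k, s⟩
    simp only [F_eq]
    exact (csmul (integrable_finsetSum _ fun i _ => ismul (hBi k (s+i)) _) _).aestronglyMeasurable
  · rintro ⟨k, s⟩
    refine Filter.Eventually.of_forall fun x => ?_
    dsimp only
    have hg0 : 0 ≤ ga x := (Real.exp_pos _).le
    rw [norm_smul, norm_mul, Real.norm_eq_abs, Real.norm_of_nonneg hg0, mul_assoc _ (C0 * _)]
    exact mul_le_mul_of_nonneg_left (Ft_bd E u lam hl x y η hy f k s) (by positivity)
  · exact Filter.Eventually.of_forall fun x => (hs_bd _ _).summable.mul_left _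
  · simp only [((hs_bd _ _).mul_left _).tsum_eq]
    exact bd_int u y hf hg a C0 (DD lam) (by linarith) j
  · refine Filter.Eventually.of_forall fun x => ?_
    simp only [KV_smul]
    exact (hs_kernel E u lam hl x y η hy f).const_smul _
end L
end Part10

section Part11
section C11
variable {m : ℕ}

lemma cl_ext {a b : Cl m} (h : ∀ S, coeff a S = coeff b S) : a = b := funext h
lemma coeff_mul (a b : Cl m) (S) : coeff (a * b) S = ∑ T : Finset (Fin m),
    ((-1 : ℂ) ^ ((((T ×ˢ (symmDiff T S)).filter fun p : Fin m × Fin m => p.2 < p.1).card)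
        + (T ∩ (symmDiff T S)).card))
      * coeff a T * coeff b (symmDiff T S) := rfl
lemma coeff_add (a b : Cl m) (S) : coeff (a + b) S = coeff a S + coeff b S := rfl
lemma coeff_zero (S) : coeff (0 : Cl m) S = 0 := rfl
lemma coeff_smul (c : ℂ) (a : Cl m) (S) : coeff (c • a) S = c * coeff a S := rfl
lemma coeff_rsmul (c : ℝ) (a : Cl m) (S) : coeff (c • a) S = (c:ℂ) * coeff a S := by
  change c • (coeff a S) = _
  simp
lemma coeff_one (S) : coeff (1 : Cl m) S = if S = (∅ : Finset (Fin m)) then 1 else 0 := rfl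
lemma coeff_e (i : Fin m) (S) : coeff (e m i) S = if S = {i} then 1 else 0 := rfl

def chi (i : Fin m) (S : Finset (Fin m)) : ℂ := ∏ s ∈ S, (if s ≤ i then -1 else 1)

lemma chi_sd (i j : Fin m) (S : Finset (Fin m)) :
    chi i (symmDiff {j} S) = (if j ≤ i then -1 else 1) * chi i S := by
  by_cases h : j ∈ S
  · have : symmDiff {j} S = S.erase j := by
      ext a; simp only [Finset.mem_symmDiff, Finset.mem_singleton, Finset.mem_erase]
      constructor
      · rintro (⟨rfl, h2⟩ | ⟨h1, h2⟩)
        · exact absurd h h2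
        · exact ⟨h2, h1⟩
      · rintro ⟨h1, h2⟩; exact Or.inr ⟨h2, h1⟩
    rw [this, chi, chi, ← Finset.mul_prod_erase S _ h, ← mul_assoc]
    split_ifs <;> simp
  · have : symmDiff {j} S = insert j S := by
      ext a; simp only [Finset.mem_symmDiff, Finset.mem_singleton, Finset.mem_insert]
      constructor
      · rintro (⟨rfl, h2⟩ | ⟨h1, h2⟩)
        · exact Or.inl rfl
        · exact Or.inr h1
      · rintro (rfl | h1)
        · exact Or.inl ⟨rfl, h⟩
        · exact Or.inr ⟨h1, fun h2 => h (h2 ▸ h1)⟩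
    rw [this, chi, chi, Finset.prod_insert h]

lemma chi_sq (i : Fin m) (S : Finset (Fin m)) : chi i S * chi i S = 1 := by
  rw [chi, ← Finset.prod_mul_distrib]
  refine Finset.prod_eq_one fun s _ => ?_
  split_ifs <;> simp

lemma pw {α : Type*} (s : Finset α) (p : α → Prop) [DecidablePred p] :
    (-1:ℂ)^(s.filter p).card = ∏ x ∈ s, if p x then -1 else 1 := by
  rw [Finset.prod_ite]; simp

lemma sgn_eq (T U : Finset (Fin m)) :
    (-1 : ℂ) ^ ((((T ×ˢ U).filter fun p : Fin m × Fin m => p.2 < p.1).card) + (T ∩ U).card) =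
    ∏ t ∈ T, chi t U := by
  have h : T ∩ U = T.filter (· ∈ U) := by ext; simp
  rw [pow_add, h, pw, pw, Finset.prod_product, ← Finset.prod_mul_distrib]
  refine Finset.prod_congr rfl fun t _ => ?_
  have h2 : (if t ∈ U then (-1:ℂ) else 1) = ∏ u ∈ U, if u = t then -1 else 1 := by
    rw [Finset.prod_ite_eq']
  rw [h2, ← Finset.prod_mul_distrib, chi]
  refine Finset.prod_congr rfl fun u _ => ?_
  rcases lt_trichotomy u t with h | h | h
  · simp [h, h.le, h.ne]
  · simp [h]
  · simp [h.not_gt, h.not_ge, h.ne']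

lemma coeff_mul' (a b : Cl m) (S) : coeff (a * b) S = ∑ T : Finset (Fin m),
    (∏ t ∈ T, chi t (symmDiff T S)) * coeff a T * coeff b (symmDiff T S) := by
  simp only [coeff_mul, sgn_eq]

lemma coeff_emul (i : Fin m) (v : Cl m) (S) :
    coeff (e m i * v) S = - (chi i S * coeff v (symmDiff {i} S)) := by
  rw [coeff_mul', Finset.sum_eq_single {i}]
  · simp [coeff_e, chi_sd]
  · intro T _ h; simp [coeff_e, h]
  · simp

lemma cl_add_mul (a b v : Cl m) : (a + b) * v = a * v + b * v := cl_ext fun S => by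
  simp only [coeff_mul', coeff_add, ← Finset.sum_add_distrib]
  exact Finset.sum_congr rfl fun T _ => by ring
lemma cl_smul_mul (c : ℂ) (a v : Cl m) : (c • a) * v = c • (a * v) := cl_ext fun S => by
  simp only [coeff_mul', coeff_smul, Finset.mul_sum]
  exact Finset.sum_congr rfl fun T _ => by ring
lemma cl_mul_add (a b v : Cl m) : v * (a + b) = v * a + v * b := cl_ext fun S => by
  simp only [coeff_mul', coeff_add, ← Finset.sum_add_distrib]
  exact Finset.sum_congr rfl fun T _ => by ring
lemma cl_mul_rsmul (c : ℝ) (a v : Cl m) : v * (c • a) = c • (v * a) := cl_ext fun S => by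
  simp only [coeff_mul', coeff_rsmul, Finset.mul_sum]
  exact Finset.sum_congr rfl fun T _ => by ring
lemma cl_one_mul (v : Cl m) : 1 * v = v := cl_ext fun S => by
  rw [coeff_mul', Finset.sum_eq_single ∅]
  · have h : symmDiff (∅ : Finset (Fin m)) S = S := bot_symmDiff S
    rw [h]; simp [coeff_one]
  · intro T _ h; simp [coeff_one, h]
  · simp

def Lm (v : Cl m) : Cl m →ₗ[ℂ] Cl m where
  toFun a := a * v
  map_add' a b := cl_add_mul a b v
  map_smul' c a := cl_smul_mul c a v

def Em (i : Fin m) : Cl m →ₗ[ℝ] Cl m where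
  toFun a := e m i * a
  map_add' a b := cl_mul_add a b _
  map_smul' c a := cl_mul_rsmul c a _

lemma fdCl : FiniteDimensional ℝ (Cl m) := inferInstanceAs (FiniteDimensional ℝ (Finset (Fin m) → ℂ))

def EE (i : Fin m) : Cl m →L[ℝ] Cl m := haveI := fdCl (m := m); LinearMap.toContinuousLinearMap (Em i)

lemma EE_apply (i : Fin m) (v : Cl m) : EE i v = e m i * v := rfl

lemma sd_comm (i j : Fin m) (S : Finset (Fin m)) :
    symmDiff {j} (symmDiff {i} S) = symmDiff {i} (symmDiff {j} S) := by
  rw [← symmDiff_assoc, ← symmDiff_assoc, symmDiff_comm ({j} : Finset (Fin m))]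

lemma EE_rel : CRel (EE (m := m)) := by
  intro i j v
  simp only [EE_apply]
  refine cl_ext fun S => ?_
  rw [coeff_add]
  simp only [coeff_emul, chi_sd]
  rw [sd_comm]
  by_cases h : i = j
  · subst h
    rw [if_pos rfl, coeff_rsmul]
    simp only [le_refl, if_true, symmDiff_symmDiff_cancel_left]
    have := chi_sq i S
    push_cast
    linear_combination (-2 * coeff v S) * this
  · rw [if_neg h, coeff_zero]
    rcases lt_or_gt_of_ne h with h | h
    · simp only [h.le, h.not_ge, if_true, if_false]; ring
    · simp only [h.le, h.not_ge, if_true, if_false]; ring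

lemma ee_mul (j k : Fin m) (h : j < k) (v : Cl m) : (e m j * e m k) * v = e m j * (e m k * v) := by
  have hc : ∀ T, coeff (e m j * e m k) T = if T = {j, k} then 1 else 0 := by
    intro T
    rw [coeff_emul, coeff_e]
    have hs : ({j, k} : Finset (Fin m)) = symmDiff {j} {k} := by
      ext a; simp only [Finset.mem_symmDiff, Finset.mem_singleton, Finset.mem_insert]
      constructor
      · rintro (rfl | rfl)
        · exact Or.inl ⟨rfl, h.ne⟩
        · exact Or.inr ⟨rfl, h.ne'⟩
      · rintro (h | h) <;> tauto
    by_cases hT : symmDiff {j} T = {k}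
    · have : T = {j, k} := by rw [hs, ← hT, symmDiff_symmDiff_cancel_left]
      rw [if_pos hT, if_pos this, this, hs, chi_sd]
      simp [chi, h.not_ge]
    · have : T ≠ {j, k} := fun h2 => hT (by rw [h2, hs, symmDiff_symmDiff_cancel_left])
      rw [if_neg hT, if_neg this]; simp
  refine cl_ext fun S => ?_
  have hs : symmDiff ({j, k} : Finset (Fin m)) S = symmDiff {j} (symmDiff {k} S) := by
    rw [← symmDiff_assoc]; congr 1
    ext a; simp only [Finset.mem_symmDiff, Finset.mem_singleton, Finset.mem_insert]
    constructor
    · rintro (rfl | rfl)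
      · exact Or.inl ⟨rfl, h.ne⟩
      · exact Or.inr ⟨rfl, h.ne'⟩
    · rintro (h | h) <;> tauto
  rw [coeff_mul', Finset.sum_eq_single {j, k}]
  · rw [hc, if_pos rfl, Finset.prod_pair h.ne, coeff_emul, coeff_emul, hs, sd_comm]
    simp only [chi_sd]
    simp [h.le, h.not_ge, mul_assoc]
  · intro T _ hT; rw [hc, if_neg hT]; simp
  · simp

lemma vec_mul (x : Fin m → ℝ) (v : Cl m) : vec m x * v = vE EE x v := by
  have : vec m x * v = Lm v (vec m x) := rfl
  rw [this, vec, map_sum, vE_apply]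
  refine Finset.sum_congr rfl fun i _ => ?_
  rw [map_smul]
  refine cl_ext fun S => ?_
  rw [coeff_smul, coeff_rsmul]; rfl

lemma wedge_mul (x y : Fin m → ℝ) (v : Cl m) :
    wedge m x y * v = - vE EE y (vE EE x v) - ip x y • v := by
  have h0 : wedge m x y * v = ∑ j : Fin m, ∑ k : Fin m,
      if j < k then (x j * y k - x k * y j) • (EE j (EE k v)) else 0 := by
    have : wedge m x y * v = Lm v (wedge m x y) := rfl
    rw [this, wedge, map_sum]
    refine Finset.sum_congr rfl fun j _ => ?_
    rw [map_sum]
    refine Finset.sum_congr rfl fun k _ => ?_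
    split_ifs with h
    · rw [map_smul]
      have : Lm v (e m j * e m k) = EE j (EE k v) := ee_mul j k h v
      rw [this]
      refine cl_ext fun S => ?_
      rw [coeff_smul, coeff_rsmul]
    · simp
  have h1 : vE EE x (vE EE y v) = ∑ j : Fin m, ∑ k, (x j * y k) • EE j (EE k v) := by
    simp only [vE_apply, map_sum, map_smul, Finset.smul_sum, smul_smul]
    rw [Finset.sum_comm]
    simp only [mul_comm]
  have h2 : wedge m x y * v = vE EE x (vE EE y v) + ip x y • v := by
    have a1 : ∑ j : Fin m, ∑ k : Fin m, (if j < k then (x j * y k - x k * y j) • (EE j (EE k v)) else 0) =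
        ∑ j : Fin m, ∑ k : Fin m, (if j < k then (x j * y k) • (EE j (EE k v)) else 0) +
        ∑ j : Fin m, ∑ k : Fin m, (if k < j then (x j * y k) • (EE j (EE k v)) else 0) := by
      rw [Finset.sum_comm (f := fun j k : Fin m => (if k < j then (x j * y k) • (EE j (EE k v)) else 0)),
        ← Finset.sum_add_distrib]
      refine Finset.sum_congr rfl fun j _ => ?_
      rw [← Finset.sum_add_distrib]
      refine Finset.sum_congr rfl fun k _ => ?_
      split_ifs with h
      · have := EE_rel j k v
        rw [if_neg h.ne] at this
        rw [eq_neg_of_add_eq_zero_right this]; module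
      · simp
    have a2 : ip x y • v = - ∑ j : Fin m, ∑ k : Fin m, (if j = k then (x j * y k) • (EE j (EE k v)) else 0) := by
      simp only [Finset.sum_ite_eq, Finset.mem_univ, if_true]
      rw [ip, Finset.sum_smul, ← Finset.sum_neg_distrib]
      refine Finset.sum_congr rfl fun j _ => ?_
      have h := EE_rel j j v
      rw [if_pos rfl, ← two_smul ℝ, neg_smul, ← smul_neg] at h
      rw [smul_right_injective _ (two_ne_zero' ℝ) h]; module
    rw [h0, a1, a2, h1, ← sub_eq_add_neg, eq_sub_iff_add_eq, ← Finset.sum_add_distrib, ← Finset.sum_add_distrib]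
    refine Finset.sum_congr rfl fun j _ => ?_
    rw [← Finset.sum_add_distrib, ← Finset.sum_add_distrib]
    refine Finset.sum_congr rfl fun k _ => ?_
    rcases lt_trichotomy j k with h | h | h
    · simp [h, h.not_gt, h.ne]
    · simp [h]
    · simp [h, h.not_gt, h.ne']
  have h3 := vE_rel EE_rel x y v
  rw [h2, eq_sub_of_add_eq h3]
  module

abbrev nsC : NormedSpace ℂ (Cl m) :=
  { (inferInstance : Module ℂ (Cl m)) with
    norm_smul_le := fun a b =>
      NormedSpace.norm_smul_le (𝕜 := ℂ) (E := Finset (Fin m) → ℂ) a b }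

lemma istC : IsScalarTower ℝ ℂ (Cl m) := ⟨fun a b c => cl_ext fun S => by
  rw [coeff_smul, coeff_rsmul, coeff_smul, ← mul_assoc]; simp⟩

attribute [local instance] nsC

lemma K_mul (x y : Fin m → ℝ) (v : Cl m) :
    Kminus m x y * v = KV EE (Complex.I ^ m) (((m:ℝ) - 2)/2) x y v := by
  rw [Kminus, KV, WV, ← wedge_mul, cl_add_mul, cl_smul_mul, cl_smul_mul, cl_one_mul]
  
end C11
end Part11

section Part12
section Fin12
variable {V : Type*} [NormedAddCommGroup V] [NormedSpace ℂ V] [NormedSpace ℝ V]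
  [IsScalarTower ℝ ℂ V] [CompleteSpace V]

lemma unit_dir {m : ℕ} (hm : 2 ≤ m) (y : Fin m → ℝ) : ∃ η : Fin m → ℝ, ip η η = 1 ∧ y = nrm y • η := by
  by_cases h : nrm y = 0
  · refine ⟨Pi.single ⟨0, by omega⟩ 1, ?_, ?_⟩
    · rw [ip, Finset.sum_eq_single ⟨0, by omega⟩]
      · simp
      · intro b _ hb; simp [hb]
      · simp
    · rw [h, zero_smul]
      have h2 : ip y y = 0 := by rw [← nrm_sq, h]; simp
      rw [ip, Finset.sum_eq_zero_iff_of_nonneg (fun _ _ => mul_self_nonneg _)] at h2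
      ext i
      simpa using h2 i (Finset.mem_univ i)
  · refine ⟨(nrm y)⁻¹ • y, ?_, ?_⟩
    · rw [ip_smul_r, ip_self_smul, ← nrm_sq]; field_simp
    · rw [smul_smul, mul_inv_cancel₀ h, one_smul]

lemma hu_aux {m : ℕ} (hm : 2 ≤ m) (k : ℕ) (h : (k:ℝ) + ((m:ℝ)-2)/2 = 0) : Complex.I^m + (-1)^k = 0 := by
  have h1 : (2:ℝ) ≤ m := by exact_mod_cast hm
  have hk : (0:ℝ) ≤ k := by positivity
  have hm2 : (m:ℝ) = 2 := by linarith
  have hk0 : (k:ℝ) = 0 := by linarith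
  have : m = 2 := by exact_mod_cast hm2
  have : k = 0 := by exact_mod_cast hk0
  subst_vars; simp

lemma pi_canc (m : ℕ) : (2*Real.pi) ^ (-(m:ℝ)/2) * (2*Real.pi)^((m:ℝ)/2) = 1 := by
  rw [← Real.rpow_add (by positivity)]; ring_nf; simp

theorem final1 {m : ℕ} {E : Fin m → V →L[ℝ] V} {k : ℕ} {M : (Fin m → ℝ) → V} (h : MG E k M) (hm : 2 ≤ m)
    (j : ℕ) (y : Fin m → ℝ) :
    ((2*Real.pi) ^ (-(m:ℝ)/2)) • ∫ x, KV E (Complex.I^m) (((m:ℝ)-2)/2) x y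
      ((lag ((k:ℝ)+((m:ℝ)-2)/2) j (ip x x) * ga x) • M x) =
    ((-1 : ℝ)^(j + k)) • ((lag ((k:ℝ)+((m:ℝ)-2)/2) j (ip y y) * Real.exp (-(ip y y)/2)) • M y) := by
  obtain ⟨η, hη, hy⟩ := unit_dir hm y
  have hl : 0 ≤ ((m:ℝ)-2)/2 := by
    have : (2:ℝ) ≤ m := by exact_mod_cast hm
    linarith
  rw [gen_main (Complex.I^m) _ hl y η hy h.dg h.xdg k j ((-1)^k) (M η) (fun k' i => by
    rw [T1 h hm _ _ rfl η hη k' i (hu_aux hm k')]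
    congr 2
    split_ifs with hk
    · subst hk; push_cast; ring
    · rfl)]
  have hMy : M y = nrm y^k • M η := by
    conv_lhs => rw [hy]
    exact h.hom _ _
  rw [hMy]
  simp only [rs, smul_smul]
  congr 1
  have := pi_canc m
  generalize (2*Real.pi) ^ (-(m:ℝ)/2) = a at *
  generalize (2*Real.pi) ^ ((m:ℝ)/2) = b at *
  have h2 : (a:ℂ) * b = 1 := by exact_mod_cast this
  push_cast
  rw [pow_add]
  linear_combination (((nrm y:ℝ):ℂ)^k * ((-1)^j * (((lag ((k:ℝ)+((m:ℝ)-2)/2) j (ip y y) : ℝ):ℂ) * Complex.exp (-((ip y y : ℝ):ℂ)/2))) * (-1)^k) * h2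

theorem final2 {m : ℕ} {E : Fin m → V →L[ℝ] V} {k : ℕ} {M : (Fin m → ℝ) → V} (h : MG E k M) (hm : 2 ≤ m)
    (j : ℕ) (y : Fin m → ℝ) :
    ((2*Real.pi) ^ (-(m:ℝ)/2)) • ∫ x, KV E (Complex.I^m) (((m:ℝ)-2)/2) x y
      ((lag (((k+1:ℕ):ℝ)+((m:ℝ)-2)/2) j (ip x x) * ga x) • vE E x (M x)) =
    (Complex.I^m * (-1 : ℂ)^(j + 1)) • ((lag (((k+1:ℕ):ℝ)+((m:ℝ)-2)/2) j (ip y y) * Real.exp (-(ip y y)/2)) • vE E y (M y)) := by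
  obtain ⟨η, hη, hy⟩ := unit_dir hm y
  have hl : 0 ≤ ((m:ℝ)-2)/2 := by
    have : (2:ℝ) ≤ m := by exact_mod_cast hm
    linarith
  have hg : ∃ g', DG (fun x => vE E x (vE E x (M x))) g' := by
    have : ∀ x, vE E x (vE E x (M x)) = ip x x • (-(ContinuousLinearMap.id ℝ V)) (M x) := fun x => by
      rw [vE_sq h.rel]; simp
    simp only [this]
    exact ⟨_, DG.ipself.smul (h.dg.clm _)⟩
  obtain ⟨g', hg⟩ := hg
  rw [gen_main (Complex.I^m) _ hl y η hy h.xdg hg (k+1) j (-Complex.I^m) (vE E η (M η)) (fun k' i => by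
    rw [T2 h hm _ _ rfl η hη k' i (hu_aux hm k')]
    congr 2
    split_ifs with hk
    · subst hk; push_cast; ring
    · rfl)]
  have hMy : vE E y (M y) = nrm y^(k+1) • vE E η (M η) := by
    conv_lhs => rw [hy]
    exact h.xhom _ _
  rw [hMy]
  simp only [rs, smul_smul]
  congr 1
  have := pi_canc m
  generalize (2*Real.pi) ^ (-(m:ℝ)/2) = a at *
  generalize (2*Real.pi) ^ ((m:ℝ)/2) = b at *
  have h2 : (a:ℂ) * b = 1 := by exact_mod_cast this
  generalize lag (((k+1:ℕ):ℝ)+((m:ℝ)-2)/2) j (ip y y) = L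
  push_cast
  rw [pow_succ (-1:ℂ)]
  linear_combination (((nrm y:ℝ):ℂ)^(k+1) * ((-1)^j * ((L:ℂ) * Complex.exp (-((ip y y : ℝ):ℂ)/2))) * (-Complex.I^m)) * h2

end Fin12

section FinCl
attribute [local instance] nsC istC

lemma final_cl (m : ℕ) (hm : 2 ≤ m) (j k : ℕ)
    (M : (Fin m → ℝ) → Cl m) (hM : ContDiff ℝ ⊤ M)
    (hhom : ∀ (c : ℝ) (x : Fin m → ℝ), M (c • x) = c^k • M x)
    (hmono : ∀ x, dirac M x = 0)
    (y : Fin m → ℝ) :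
    ((2*Real.pi) ^ (-(m:ℝ)/2)) •
        (∫ x : Fin m → ℝ, Kminus m x y *
          ((lag ((m:ℝ)/2 + k - 1) j (ip x x) * Real.exp (-(ip x x)/2)) • M x))
      = ((-1 : ℝ)^(j + k)) •
          ((lag ((m:ℝ)/2 + k - 1) j (ip y y) * Real.exp (-(ip y y)/2)) • M y) ∧
    ((2*Real.pi) ^ (-(m:ℝ)/2)) •
        (∫ x : Fin m → ℝ, Kminus m x y *
          ((lag ((m:ℝ)/2 + k) j (ip x x) * Real.exp (-(ip x x)/2)) • (vec m x * M x)))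
      = (Complex.I^m * (-1 : ℂ)^(j + 1)) •
          ((lag ((m:ℝ)/2 + k) j (ip y y) * Real.exp (-(ip y y)/2)) • (vec m y * M y)) := by
  have h : MG EE k M := ⟨EE_rel, hM, hhom, hmono⟩
  have e1 : (m:ℝ)/2 + k - 1 = (k:ℝ) + ((m:ℝ)-2)/2 := by ring
  have e2 : (m:ℝ)/2 + k = ((k+1:ℕ):ℝ) + ((m:ℝ)-2)/2 := by push_cast; ring
  simp only [K_mul, vec_mul]
  rw [e1, e2]
  exact ⟨final1 h hm j y, final2 h hm j y⟩
end FinCl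
end Part12

/-- The basis functions
`ψ_{2j,k}(x) = L_j^{m/2+k-1}(|x|²) M_k(x) e^{-|x|²/2}` and
`ψ_{2j+1,k}(x) = L_j^{m/2+k}(|x|²) x M_k(x) e^{-|x|²/2}`
are eigenfunctions of the Clifford-Fourier transform:
`F_- ψ_{2j,k} = (-1)^{j+k} ψ_{2j,k}` and `F_- ψ_{2j+1,k} = i^m (-1)^{j+1} ψ_{2j+1,k}`. -/
theorem clifford_fourier_eigenfunctions (m : ℕ) (hm : 2 ≤ m) (j k : ℕ)
    (M : (Fin m → ℝ) → Cl m) (hM : ContDiff ℝ ⊤ M)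
    (hhom : ∀ (c : ℝ) (x : Fin m → ℝ), M (c • x) = c^k • M x)
    (hmono : ∀ x, dirac M x = 0)
    (y : Fin m → ℝ) :
    ((2*Real.pi) ^ (-(m:ℝ)/2)) •
        (∫ x : Fin m → ℝ, Kminus m x y *
          ((lag ((m:ℝ)/2 + k - 1) j (ip x x) * Real.exp (-(ip x x)/2)) • M x))
      = ((-1 : ℝ)^(j + k)) •
          ((lag ((m:ℝ)/2 + k - 1) j (ip y y) * Real.exp (-(ip y y)/2)) • M y) ∧
    ((2*Real.pi) ^ (-(m:ℝ)/2)) •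
        (∫ x : Fin m → ℝ, Kminus m x y *
          ((lag ((m:ℝ)/2 + k) j (ip x x) * Real.exp (-(ip x x)/2)) • (vec m x * M x)))
      = (Complex.I^m * (-1 : ℂ)^(j + 1)) •
          ((lag ((m:ℝ)/2 + k) j (ip y y) * Real.exp (-(ip y y)/2)) • (vec m y * M y)) := by
  exact final_cl m hm j k M hM hhom hmono y

end CliffordFourier
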